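/- arXiv:1206.4541 — 4 statements merged into one kernel-verified Lean document; each statement's English description precedes it below -/
import Mathlib

section
/- Let c > 0 be a real number and n a positive integer with (2/π)·c ≤ n < (2/π + 1/25)·c. Then ν(n,c) ≥ 1/10, where ν(n,c) = √π · cⁿ · (n!)² / ( (2n)! · Γ(n + 3/2) ) and Γ denotes the gamma function. -/
open Real

lemma gamma_aux (n : ℕ) :
    Real.Gamma ((n : ℝ) + 1 / 2) * 4 ^ n * (n.factorial : ℝ) = ((2 * n).factorial : ℝ) * √π := by
  induction n with
  | zero => simpa using Real.Gamma_one_half_eq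
  | succ k ih =>
    have e : (((k + 1 : ℕ) : ℝ) + 1 / 2) = ((k : ℝ) + 1 / 2) + 1 := by push_cast; ring
    rw [e, Real.Gamma_add_one (by positivity), Nat.factorial_succ,
      show 2 * (k + 1) = (2 * k + 1) + 1 by ring, Nat.factorial_succ, Nat.factorial_succ]
    push_cast
    linear_combination (4 * ((k : ℝ) + 1 / 2) * (k + 1)) * ih

lemma fact_aux (n : ℕ) (hn : 0 < n) :
    ((2 * n).factorial : ℝ) ≤ n.factorial * √2 * 4 ^ n * ((n : ℝ) / exp 1) ^ n := by
  obtain ⟨m, rfl⟩ : ∃ m, n = m + 1 := ⟨n - 1, by omega⟩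
  have h := Stirling.stirlingSeq'_antitone (show m ≤ 2 * m + 1 by omega)
  simp only [Function.comp, Nat.succ_eq_add_one] at h
  rw [show 2 * m + 1 + 1 = 2 * (m + 1) by ring] at h
  generalize m + 1 = n at *
  have hn' : (0 : ℝ) < n := by exact_mod_cast hn
  unfold Stirling.stirlingSeq at h
  rw [div_le_div_iff₀ (by positivity) (by positivity)] at h
  have e1 : √(2 * ((2 * n : ℕ) : ℝ)) = √2 * √(2 * (n : ℝ)) := by
    rw [← Real.sqrt_mul (by norm_num)]; push_cast; rfl
  have e2 : (((2 * n : ℕ) : ℝ) / exp 1) ^ (2 * n) = 4 ^ n * (((n : ℝ) / exp 1) ^ n * ((n : ℝ) / exp 1) ^ n) := by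
    rw [pow_mul, ← mul_pow, ← mul_pow]; congr 1; push_cast; ring
  rw [e1, e2] at h
  have hp : 0 < √(2 * (n : ℝ)) * ((n : ℝ) / exp 1) ^ n := by positivity
  refine le_of_mul_le_mul_right (h.trans_eq ?_) hp
  ring

theorem stmt4 (c : ℝ) (hc : 0 < c) (n : ℕ) (hn : 0 < n)
    (h1 : 2 / π * c ≤ (n : ℝ)) (h2 : (n : ℝ) < (2 / π + 1 / 25) * c) :
    Real.sqrt π * c ^ n * (n.factorial : ℝ) ^ 2 /
        (((2 * n).factorial : ℝ) * Real.Gamma ((n : ℝ) + 3 / 2)) ≥ 1 / 10 := by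
  have hn' : (0 : ℝ) < n := by exact_mod_cast hn
  have hn1 : (1 : ℝ) ≤ n := by exact_mod_cast hn
  have hg := gamma_aux n
  have hf := fact_aux n hn
  have hs := Stirling.le_factorial_stirling n
  have he := Real.exp_one_gt_d9
  have hpi := Real.pi_gt_d4
  rw [show (n : ℝ) + 3 / 2 = ((n : ℝ) + 1 / 2) + 1 by ring, Real.Gamma_add_one (by positivity)]
  -- lower bound for c
  have hcn : (1 + 1 / 300) * (4 * ((n : ℝ) / exp 1)) ≤ c := by
    have h3 : 2 / π ≤ 2 / 3.1415 := by gcongr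
    have h4 : (n : ℝ) ≤ 0.67664 * c := by
      refine h2.le.trans ?_
      gcongr
      norm_num at h3 ⊢
      linarith
    have : (n : ℝ) / exp 1 ≤ n / 2.7182818283 := by gcongr
    have h5 : (n : ℝ) / 2.7182818283 ≤ 0.67664 * c / 2.7182818283 := by gcongr
    norm_num at this h4 h5 ⊢
    linarith
  have hcp : (1 + 1 / 300 : ℝ) ^ n * (4 ^ n * ((n : ℝ) / exp 1) ^ n) ≤ c ^ n := by
    rw [← mul_pow, ← mul_pow]
    exact pow_le_pow_left₀ (by positivity) hcn n
  have hb : (1 + n * (1 / 150) : ℝ) ≤ ((1 + 1 / 300) ^ n) ^ 2 := by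
    rw [← pow_mul]
    have := one_add_mul_le_pow (show (-2 : ℝ) ≤ 1 / 300 by norm_num) (n * 2)
    refine le_trans ?_ this
    push_cast; linarith
  have hG : 0 < Real.Gamma ((n : ℝ) + 1 / 2) := Real.Gamma_pos_of_pos (by positivity)
  have hF : (0 : ℝ) < n.factorial := by exact_mod_cast n.factorial_pos
  have hH : (0 : ℝ) < (2 * n).factorial := by exact_mod_cast (2 * n).factorial_pos
  have hp : 0 < ((n : ℝ) / exp 1) ^ n := by positivity
  have ht : 0 < (1 + 1 / 300 : ℝ) ^ n := by positivity
  have h4 : (0 : ℝ) < 4 ^ n := by positivity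
  have hq : (n : ℝ) + 1 / 2 ≤ 5 * ((1 + 1 / 300 : ℝ) ^ n * √(2 * π * n)) := by
    refine abs_le_of_sq_le_sq' ?_ (by positivity) |>.2
    rw [mul_pow, mul_pow, Real.sq_sqrt (by positivity)]
    have : (1 + n * (1 / 150) : ℝ) * (6 * n) ≤ ((1 + 1 / 300) ^ n) ^ 2 * (2 * π * n) := by
      gcongr; linarith
    nlinarith
  generalize Real.Gamma ((n : ℝ) + 1 / 2) = G at *
  generalize (n.factorial : ℝ) = F at *
  generalize ((2 * n).factorial : ℝ) = H at *
  generalize ((n : ℝ) / exp 1) ^ n = p at *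
  generalize (1 + 1 / 300 : ℝ) ^ n = t at *
  generalize (4 : ℝ) ^ n = f at *
  have hG' : G = H * √π / (f * F) := by field_simp; linarith
  have hsp : 0 < √π := by positivity
  rw [ge_iff_le, le_div_iff₀ (by positivity), hG']
  have hH2 : H ^ 2 ≤ 2 * F ^ 2 * f ^ 2 * p ^ 2 := by
    calc H ^ 2 ≤ (F * √2 * f * p) ^ 2 := by gcongr
      _ = _ := by rw [mul_pow, mul_pow, mul_pow, Real.sq_sqrt (by norm_num)]; ring
  have key : ((n : ℝ) + 1 / 2) * H ^ 2 ≤ 10 * c ^ n * F ^ 3 * f := by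
    calc ((n : ℝ) + 1 / 2) * H ^ 2 
        ≤ (5 * (t * √(2 * π * n))) * (2 * F ^ 2 * f ^ 2 * p ^ 2) := by gcongr
      _ = 10 * (t * (f * p)) * F ^ 2 * f * (√(2 * π * n) * p) := by ring
      _ ≤ 10 * c ^ n * F ^ 2 * f * F := by gcongr
      _ = _ := by ring
  have : 1 / 10 * (H * (((n : ℝ) + 1 / 2) * (H * √π / (f * F)))) = (((n : ℝ) + 1 / 2) * H ^ 2) * (√π / (10 * f * F)) := by
    field_simp
  rw [this]
  calc _ ≤ (10 * c ^ n * F ^ 3 * f) * (√π / (10 * f * F)) := by gcongr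
    _ = _ := by field_simp
end

section
/- Let c > 0 be a real number, let n be a positive integer with n > 2c/π + √42, and let ψ be the n-th PSWF with band limit c, with ODE eigenvalue χ_n. Then χ_n > c² + 42, and moreover k₀ > 2, where k₀ is the largest integer k ≥ 1 with 2k·(2k+1) < χ_n − c². -/
open Real

/-- `IsPSWF c n ψ χ lam` : `ψ` is the `n`-th prolate spheroidal wave function with
band limit `c`, ODE eigenvalue `χ` and integral eigenvalue `lam`. -/
def IsPSWF (c : ℝ) (n : ℕ) (ψ : ℝ → ℝ) (χ : ℝ) (lam : ℂ) : Prop :=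
  ContinuousOn ψ (Set.Icc (-1) 1) ∧
  (∀ x ∈ Set.Ioo (-1 : ℝ) 1, DifferentiableAt ℝ ψ x ∧ DifferentiableAt ℝ (deriv ψ) x) ∧
  (∀ x ∈ Set.Ioo (-1 : ℝ) 1,
    (1 - x ^ 2) * deriv (deriv ψ) x - 2 * x * deriv ψ x + (χ - c ^ 2 * x ^ 2) * ψ x = 0) ∧
  {x | x ∈ Set.Ioo (-1 : ℝ) 1 ∧ ψ x = 0}.Finite ∧
  {x | x ∈ Set.Ioo (-1 : ℝ) 1 ∧ ψ x = 0}.ncard = n ∧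
  (∫ t in (-1 : ℝ)..1, (ψ t) ^ 2) = 1 ∧
  ∀ x ∈ Set.Icc (-1 : ℝ) 1,
    lam * (ψ x : ℂ) =
      ∫ t in (-1 : ℝ)..1, (ψ t : ℂ) * Complex.exp (Complex.I * (c : ℂ) * (x : ℂ) * (t : ℂ))

namespace PSWFaux

structure Sol (c χ : ℝ) (ψ w : ℝ → ℝ) : Prop where
  cont : ContinuousOn ψ (Set.Icc (-1) 1)
  dpsi : ∀ x ∈ Set.Ioo (-1 : ℝ) 1, HasDerivAt ψ (w x / (1 - x ^ 2)) x
  dw : ∀ x ∈ Set.Ioo (-1 : ℝ) 1, HasDerivAt w (-(χ - c ^ 2 * x ^ 2) * ψ x) x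

lemma Sol.neg {c χ : ℝ} {ψ w : ℝ → ℝ} (h : Sol c χ ψ w) :
    Sol c χ (fun x => -ψ x) (fun x => -w x) where
  cont := h.cont.neg
  dpsi x hx := by
    have := (h.dpsi x hx).neg
    refine this.congr_deriv ?_
    ring
  dw x hx := by
    have := (h.dw x hx).neg
    refine this.congr_deriv ?_
    ring

lemma Sol.refl {c χ : ℝ} {ψ w : ℝ → ℝ} (h : Sol c χ ψ w) :
    Sol c χ (fun x => ψ (-x)) (fun x => -w (-x)) where
  cont := by
    apply h.cont.comp continuous_neg.continuousOn
    intro x hx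
    exact ⟨by linarith [hx.2], by linarith [hx.1]⟩
  dpsi x hx := by
    have hx' : -x ∈ Set.Ioo (-1 : ℝ) 1 := ⟨by linarith [hx.2], by linarith [hx.1]⟩
    have := (h.dpsi (-x) hx').comp x (hasDerivAt_neg x)
    refine this.congr_deriv ?_
    rw [neg_sq]; ring
  dw x hx := by
    have hx' : -x ∈ Set.Ioo (-1 : ℝ) 1 := ⟨by linarith [hx.2], by linarith [hx.1]⟩
    have := ((h.dw (-x) hx').comp x (hasDerivAt_neg x)).neg
    refine this.congr_deriv ?_
    rw [neg_sq]; ring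

noncomputable def G (c D x : ℝ) : ℝ := √((1 - x ^ 2) * (c ^ 2 * (1 - x ^ 2) + D))

noncomputable def B (c D x : ℝ) : ℝ :=
  x * (1 - x ^ 2) * (2 * (c ^ 2 * (1 - x ^ 2)) + D) / (2 * G c D x ^ 3)

noncomputable def sig (c D x : ℝ) : ℝ := c * x + √D * arcsin x

lemma pos_p {x : ℝ} (hx : x ∈ Set.Ioo (-1 : ℝ) 1) : 0 < 1 - x ^ 2 := by
  nlinarith [hx.1, hx.2]

lemma pos_Q {c D x : ℝ} (hD : 0 < D) (hx : x ∈ Set.Ioo (-1 : ℝ) 1) :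
    0 < c ^ 2 * (1 - x ^ 2) + D := by
  have := pos_p hx
  positivity

lemma G_pos {c D x : ℝ} (hD : 0 < D) (hx : x ∈ Set.Ioo (-1 : ℝ) 1) : 0 < G c D x :=
  Real.sqrt_pos.2 (mul_pos (pos_p hx) (pos_Q hD hx))

lemma G_sq {c D x : ℝ} (hD : 0 < D) (hx : x ∈ Set.Ioo (-1 : ℝ) 1) :
    G c D x ^ 2 = (1 - x ^ 2) * (c ^ 2 * (1 - x ^ 2) + D) :=
  Real.sq_sqrt (mul_pos (pos_p hx) (pos_Q hD hx)).le

lemma G_deriv {c D x : ℝ} (hD : 0 < D) (hx : x ∈ Set.Ioo (-1 : ℝ) 1) :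
    HasDerivAt (G c D) (-x * (2 * (c ^ 2 * (1 - x ^ 2)) + D) / G c D x) x := by
  have h1 : HasDerivAt (fun x : ℝ => 1 - x ^ 2) (-(2 * x)) x := by
    have := (hasDerivAt_pow 2 x).const_sub 1
    refine this.congr_deriv ?_
    norm_num
  have h2 := (h1.mul ((h1.const_mul (c ^ 2)).add_const D)).sqrt
    (mul_pos (pos_p hx) (pos_Q hD hx)).ne'
  have hG := G_pos (c := c) hD hx
  refine h2.congr_deriv ?_
  change _ / (2 * G c D x) = _
  field_simp
  ring

lemma B_deriv {c D x : ℝ} (hD : 0 < D) (hx : x ∈ Set.Ioo (-1 : ℝ) 1) :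
    ∃ b', 0 ≤ b' ∧ HasDerivAt (B c D) b' x := by
  have h1 : HasDerivAt (fun x : ℝ => 1 - x ^ 2) (-(2 * x)) x := by
    have := (hasDerivAt_pow 2 x).const_sub 1
    refine this.congr_deriv ?_
    norm_num
  have hG := G_pos (c := c) hD hx
  have hs := G_sq (c := c) hD hx
  have hp := pos_p hx
  have hg := G_deriv (c := c) hD hx
  have h2 := (((hasDerivAt_id x).mul h1).mul (((h1.const_mul (c ^ 2)).const_mul 2).add_const D)).div
    ((hg.pow 3).const_mul 2) (by simp; positivity)
  refine ⟨_, ?_, h2⟩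
  simp only [Pi.mul_apply, id, Pi.pow_apply]
  apply div_nonneg _ (by positivity)
  have e : ∀ N N' g' : ℝ, N' * (2 * G c D x ^ 3) - N * (2 * (((3 : ℕ) : ℝ) * G c D x ^ (3 - 1) *
      (g' / G c D x))) = 2 * G c D x * (N' * G c D x ^ 2 - 3 * N * g') := by
    intro N N' g'
    push_cast
    field_simp
  rw [e, hs]
  refine mul_nonneg (by positivity) ?_
  have hp1 : 0 ≤ (1 - x ^ 2) * ((c ^ 2 * (1 - x ^ 2) + D) * (1 - x ^ 2) *
      (2 * (c ^ 2 * (1 - x ^ 2)) + D) + x ^ 2 * (4 * (c ^ 2 * (1 - x ^ 2)) ^ 2 +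
        2 * (c ^ 2 * (1 - x ^ 2)) * D + D ^ 2)) := by positivity
  refine hp1.trans_eq ?_
  ring

lemma sig_deriv {c D x : ℝ} (hx : x ∈ Set.Ioo (-1 : ℝ) 1) :
    HasDerivAt (sig c D) (c + √D * (1 / √(1 - x ^ 2))) x := by
  have h := ((hasDerivAt_id x).const_mul c).add
    ((Real.hasDerivAt_arcsin hx.1.ne'
      hx.2.ne).const_mul (√D))
  refine h.congr_deriv ?_
  simp


noncomputable def K (c D : ℝ) (ψ w : ℝ → ℝ) (x : ℝ) : ℝ := B c D x - G c D x * ψ x / w x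

lemma K_deriv {c χ D : ℝ} {ψ w : ℝ → ℝ} (h : Sol c χ ψ w) (hD : 0 < D) (hχ : χ ≤ c ^ 2 + D)
    {x : ℝ} (hx : x ∈ Set.Ioo (-1 : ℝ) 1) (hw : w x ≠ 0) :
    ∃ k', -((1 + K c D ψ w x ^ 2) * ((c ^ 2 * (1 - x ^ 2) + D) / G c D x)) ≤ k' ∧
      HasDerivAt (K c D ψ w) k' x := by
  obtain ⟨b', hb', hB⟩ := B_deriv (c := c) hD hx
  have hG := G_pos (c := c) hD hx
  have hs := G_sq (c := c) hD hx
  have hp := pos_p hx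
  have hQ := pos_Q (c := c) hD hx
  have hd := hB.sub (((G_deriv (c := c) hD hx).mul (h.dpsi x hx)).div (h.dw x hx) hw)
  refine ⟨_, ?_, hd⟩
  simp only [Pi.mul_apply]
  set p := 1 - x ^ 2 with hpdef
  set Q := c ^ 2 * p + D with hQdef
  have hS : 2 * (c ^ 2 * p) + D = Q + c ^ 2 * p := by rw [hQdef]; ring
  have hb : B c D x = x * p * (Q + c ^ 2 * p) / (2 * G c D x ^ 3) := by
    rw [B, ← hpdef, hS]
  set g := G c D x with hg
  set b := B c D x with hbdef
  have hK : K c D ψ w x = b - g * ψ x / w x := rfl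
  rw [hK, hS]
  have hq : χ - c ^ 2 * x ^ 2 ≤ Q := by
    rw [hQdef, hpdef]; linarith
  set q := χ - c ^ 2 * x ^ 2 with hqdef
  have e1 : -x * (Q + c ^ 2 * p) / g = - 2 * b * (Q / g) * g := by
    rw [hb]
    field_simp
    rw [hs]
    ring
  have e2 : g * (w x / p) = (Q / g) * w x := by
    field_simp
    rw [hs]
  rw [e1, e2]
  set m := ψ x / w x with hm
  have hψ : ψ x = m * w x := by rw [hm]; field_simp
  have e3 : b' - ((-2 * b * (Q / g) * g * ψ x + Q / g * w x) * w x - g * ψ x * (-q * ψ x)) / w x ^ 2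
     = b' + 2 * b * (Q / g) * (g * m) - Q / g - q / g * (g * m) ^ 2 := by
    rw [hψ]
    field_simp
    ring
  rw [e3]
  have e4 : g * ψ x / w x = g * m := by rw [hm]; ring
  rw [e4]
  have h5 : 0 ≤ b' + (Q / g) * b ^ 2 + (Q - q) / g * (g * m) ^ 2 := by
    have : 0 ≤ Q - q := by linarith
    positivity
  have h6 : (Q - q) / g = Q / g - q / g := by ring
  rw [h6] at h5
  nlinarith

lemma rate_le {c D x : ℝ} (hc : 0 < c) (hD : 0 < D) (hx : x ∈ Set.Ioo (-1 : ℝ) 1) :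
    (c ^ 2 * (1 - x ^ 2) + D) / G c D x ≤ c + √D * (1 / √(1 - x ^ 2)) := by
  have hG := G_pos (c := c) hD hx
  have hs := G_sq (c := c) hD hx
  have hp := pos_p hx
  have hQ := pos_Q (c := c) hD hx
  apply le_of_sq_le_sq _ (by positivity) 
  rw [div_pow, hs]
  have h1 := Real.sq_sqrt hp.le
  have h2 := Real.sq_sqrt hD.le
  have h3 : 0 < √(1 - x ^ 2) := Real.sqrt_pos.2 hp
  have h4 : (c + √D * (1 / √(1 - x ^ 2))) ^ 2 =
      c ^ 2 + 2 * c * √D * (1 / √(1 - x ^ 2)) + D / (1 - x ^ 2) := by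
    have : (√D * (1 / √(1 - x ^ 2))) ^ 2 = D / (1 - x ^ 2) := by
      rw [mul_pow, div_pow, h1, h2]; ring
    nlinarith
  have h5 : (c ^ 2 * (1 - x ^ 2) + D) ^ 2 / ((1 - x ^ 2) * (c ^ 2 * (1 - x ^ 2) + D)) =
      c ^ 2 + D / (1 - x ^ 2) := by
    field_simp
  rw [h4, h5]
  have : 0 ≤ 2 * c * √D * (1 / √(1 - x ^ 2)) := by positivity
  linarith

lemma sig_mono {c D : ℝ} (hc : 0 < c) : Monotone (sig c D) := by
  intro x y hxy
  have := Real.monotone_arcsin hxy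
  unfold sig
  gcongr

lemma mono_step {c χ D : ℝ} {ψ w : ℝ → ℝ} (h : Sol c χ ψ w) (hc : 0 < c) (hD : 0 < D)
    (hχ : χ ≤ c ^ 2 + D) {z R : ℝ} (hz : -1 < z) (hR : R ≤ 1)
    (hw : ∀ x ∈ Set.Ico z R, 0 < w x) :
    MonotoneOn (fun x => arctan (K c D ψ w x) + sig c D x) (Set.Ico z R) := by
  have hsub : ∀ x ∈ Set.Ico z R, x ∈ Set.Ioo (-1 : ℝ) 1 := fun x hx =>
    ⟨by linarith [hx.1], by linarith [hx.2]⟩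
  have hder : ∀ x ∈ Set.Ico z R, ∃ d, 0 ≤ d ∧
      HasDerivAt (fun x => arctan (K c D ψ w x) + sig c D x) d x := by
    intro x hx
    obtain ⟨k', hk', hK⟩ := K_deriv h hD hχ (hsub x hx) (hw x hx).ne'
    refine ⟨_, ?_, hK.arctan.add (sig_deriv (hsub x hx))⟩
    have h1 := rate_le hc hD (hsub x hx)
    have h2 : -((c ^ 2 * (1 - x ^ 2) + D) / G c D x) ≤ 1 / (1 + K c D ψ w x ^ 2) * k' := by
      rw [one_div_mul_eq_div, le_div_iff₀ (by positivity)]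
      linarith
    linarith
  apply monotoneOn_of_deriv_nonneg (convex_Ico z R)
  · intro x hx
    obtain ⟨d, _, hd⟩ := hder x hx
    exact hd.continuousAt.continuousWithinAt
  · intro x hx
    obtain ⟨d, _, hd⟩ := hder x (interior_subset hx)
    exact hd.differentiableAt.differentiableWithinAt
  · intro x hx
    obtain ⟨d, h0, hd⟩ := hder x (interior_subset hx)
    rw [hd.deriv]; exact h0

lemma half_of_unbdd {c χ D : ℝ} {ψ w : ℝ → ℝ} (h : Sol c χ ψ w) (hc : 0 < c) (hD : 0 < D)
    (hχ : χ ≤ c ^ 2 + D) {z R : ℝ} (hz : -1 < z) (hR : R ≤ 1) (hψ : ψ z = 0)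
    (hw : ∀ x ∈ Set.Ico z R, 0 < w x)
    (hK : ∀ N : ℝ, ∃ x ∈ Set.Ico z R, K c D ψ w x ≤ -N) :
    π / 2 + arctan (B c D z) ≤ sig c D R - sig c D z := by
  have hall : ∀ N : ℝ, arctan N ≤ sig c D R - sig c D z - arctan (B c D z) := by
    intro N
    obtain ⟨x, hx, hxN⟩ := hK N
    have hzR : z < R := lt_of_le_of_lt hx.1 hx.2
    have h1 := mono_step h hc hD hχ hz hR hw (Set.left_mem_Ico.2 hzR) hx hx.1
    have h2 := Real.arctan_mono hxN
    rw [arctan_neg] at h2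
    have h3 := sig_mono (c := c) (D := D) hc hx.2.le
    have h4 : K c D ψ w z = B c D z := by simp [K, hψ]
    simp only [h4] at h1
    linarith
  have := le_of_tendsto' (tendsto_arctan_atTop.mono_right nhdsWithin_le_nhds) hall
  linarith

lemma psi_mono {c χ : ℝ} {ψ w : ℝ → ℝ} (h : Sol c χ ψ w) {z R : ℝ} (hz : -1 < z) (hR : R ≤ 1)
    (hw : ∀ x ∈ Set.Ico z R, 0 < w x) : StrictMonoOn ψ (Set.Icc z R) := by
  apply strictMonoOn_of_deriv_pos (convex_Icc z R)
  · exact h.cont.mono (Set.Icc_subset_Icc hz.le hR)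
  · intro x hx
    rw [interior_Icc] at hx
    have hx' : x ∈ Set.Ioo (-1 : ℝ) 1 := ⟨by linarith [hx.1], by linarith [hx.2]⟩
    rw [(h.dpsi x hx').deriv]
    exact div_pos (hw x ⟨hx.1.le, hx.2⟩) (pos_p hx')

lemma w_bound {c χ D : ℝ} {ψ w : ℝ → ℝ} (h : Sol c χ ψ w) (hD : 0 < D)
    (hχ : χ ≤ c ^ 2 + D) {x : ℝ} (hx0 : 0 ≤ x) (hx1 : x < 1)
    (hψ : ∀ y ∈ Set.Ico x 1, 0 < ψ y ∧ ψ y ≤ ψ 1) :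
    w x ≤ (c ^ 2 * (1 - x ^ 2) + D) * ψ 1 * (1 - x) := by
  set Q := c ^ 2 * (1 - x ^ 2) + D with hQ
  have hsub : ∀ y ∈ Set.Ico x 1, y ∈ Set.Ioo (-1 : ℝ) 1 := fun y hy =>
    ⟨by linarith [hy.1], hy.2⟩
  have hxm : x ∈ Set.Ico x 1 := ⟨le_rfl, hx1⟩
  have hQ0 : 0 < Q := pos_Q hD (hsub x hxm)
  have m1 : MonotoneOn (fun y => w y + Q * ψ 1 * y) (Set.Ico x 1) := by
    have hd : ∀ y ∈ Set.Ico x 1, HasDerivAt (fun y => w y + Q * ψ 1 * y)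
        (-(χ - c ^ 2 * y ^ 2) * ψ y + Q * ψ 1 * 1) y := fun y hy =>
      (h.dw y (hsub y hy)).add ((hasDerivAt_id y).const_mul _)
    apply monotoneOn_of_deriv_nonneg (convex_Ico x 1)
    · exact fun y hy => (hd y hy).continuousAt.continuousWithinAt
    · exact fun y hy => (hd y (interior_subset hy)).differentiableAt.differentiableWithinAt
    · intro y hy
      have hy := interior_subset hy
      rw [(hd y hy).deriv]
      obtain ⟨h1, h2⟩ := hψ y hy
      have h3 : χ - c ^ 2 * y ^ 2 ≤ Q := by
        have : x ^ 2 ≤ y ^ 2 := by nlinarith [hy.1]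
        have := mul_le_mul_of_nonneg_left this (sq_nonneg c)
        rw [hQ]; linarith
      nlinarith
  by_contra hcon
  push Not at hcon
  set ε := w x - Q * ψ 1 * (1 - x) with hε
  have hε0 : 0 < ε := by linarith
  have hψ1 : 0 < ψ 1 := (hψ x hxm).1.trans_le (hψ x hxm).2
  have hwε : ∀ y ∈ Set.Ico x 1, ε ≤ w y := by
    intro y hy
    have := m1 hxm hy hy.1
    simp only at this
    have h2 : Q * ψ 1 * y ≤ Q * ψ 1 * 1 := by
      have := hy.2.le
      gcongr
    linarith
  have m2 : MonotoneOn (fun y => ψ y + ε / 2 * Real.log (1 - y)) (Set.Ico x 1) := by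
    have hd : ∀ y ∈ Set.Ico x 1, HasDerivAt (fun y => ψ y + ε / 2 * Real.log (1 - y))
        (w y / (1 - y ^ 2) + ε / 2 * (-1 / (1 - y))) y := fun y hy =>
      (h.dpsi y (hsub y hy)).add
        ((((hasDerivAt_id y).const_sub 1).log (by simp; linarith [hy.2])).const_mul _)
    apply monotoneOn_of_deriv_nonneg (convex_Ico x 1)
    · exact fun y hy => (hd y hy).continuousAt.continuousWithinAt
    · exact fun y hy => (hd y (interior_subset hy)).differentiableAt.differentiableWithinAt
    · intro y hy
      have hy := interior_subset hy
      rw [(hd y hy).deriv]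
      have h1 := hwε y hy
      have hp := pos_p (hsub y hy)
      have hy1 : 0 < 1 - y := by linarith [hy.2]
      have hy2 : 0 < 1 + y := by linarith [hy.1]
      have e : w y / (1 - y ^ 2) + ε / 2 * (-1 / (1 - y)) =
          (w y - ε / 2 * (1 + y)) / (1 - y ^ 2) := by
        have : 1 - y ^ 2 = (1 - y) * (1 + y) := by ring
        rw [this]
        field_simp
        ring
      rw [e]
      apply div_nonneg _ hp.le
      nlinarith
  have hM : 0 < 2 * ψ 1 / ε := by positivity
  set M := 2 * ψ 1 / ε with hMd
  have hx1' : 0 < 1 - x := by linarith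
  have hexp : Real.exp (-M) ≤ 1 := Real.exp_le_one_iff.2 (by linarith)
  have hexp0 := Real.exp_pos (-M)
  have hy : 1 - (1 - x) * Real.exp (-M) ∈ Set.Ico x 1 := by
    constructor
    · nlinarith
    · have := mul_pos hx1' hexp0
      linarith
  have h1 := m2 hxm hy hy.1
  have h2 := (hψ _ hy).2
  simp only [sub_sub_cancel] at h1
  rw [Real.log_mul hx1'.ne' hexp0.ne', Real.log_exp] at h1
  have h3 : ε / 2 * M = ψ 1 := by rw [hMd]; field_simp
  have h4 := (hψ x hxm).1
  nlinarith

lemma half {c χ D : ℝ} {ψ w : ℝ → ℝ} (h : Sol c χ ψ w) (hc : 0 < c) (hD : 0 < D)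
    (hχ : χ ≤ c ^ 2 + D) {z : ℝ} (hz : z ∈ Set.Ioo (-1 : ℝ) 1) (hψ : ψ z = 0)
    (hw : 0 < w z) :
    ∃ R, z < R ∧ R ≤ 1 ∧ (∀ x ∈ Set.Ico z R, 0 < w x) ∧
      π / 2 + arctan (B c D z) ≤ sig c D R - sig c D z := by
  have hwc : ContinuousOn w (Set.Ioo (-1) 1) := fun x hx =>
    (h.dw x hx).continuousAt.continuousWithinAt
  by_cases hall : ∀ x ∈ Set.Ico z 1, 0 < w x
  · refine ⟨1, hz.2, le_rfl, hall, ?_⟩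
    apply half_of_unbdd h hc hD hχ hz.1 le_rfl hψ hall
    intro N
    have hm := psi_mono h hz.1 le_rfl hall
    have hpos : ∀ y ∈ Set.Ioc z 1, 0 < ψ y := by
      intro y hy
      rw [← hψ]
      exact hm ⟨le_rfl, hz.2.le⟩ ⟨hy.1.le, hy.2⟩ hy.1
    have hψ1 := hpos 1 ⟨hz.2, le_rfl⟩
    have hGc : Continuous (G c D) := by unfold G; fun_prop
    have hG1 : G c D 1 = 0 := by simp [G]
    have t1 : Filter.Tendsto ψ (nhdsWithin 1 (Set.Iio 1)) (nhds (ψ 1)) := by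
      have := (h.cont 1 (by norm_num)).mono_left
        (nhdsWithin_mono 1 (Set.Ioo_subset_Icc_self (a := (-1 : ℝ)) (b := 1)))
      rwa [nhdsWithin_Ioo_eq_nhdsLT (by norm_num)] at this
    have ev1 := t1.eventually (lt_mem_nhds (by linarith : 3 / 4 * ψ 1 < ψ 1))
    have ev2 : ∀ᶠ x in nhdsWithin (1 : ℝ) (Set.Iio 1), G c D x < 1 / (2 * (|N| + 1)) := by
      have : Filter.Tendsto (G c D) (nhdsWithin 1 (Set.Iio 1)) (nhds 0) := by
        rw [← hG1]; exact hGc.continuousAt.mono_left nhdsWithin_le_nhds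
      exact this.eventually (gt_mem_nhds (by positivity))
    have ev3 : ∀ᶠ x in nhdsWithin (1 : ℝ) (Set.Iio 1), x ∈ Set.Ioo (max z 0) 1 :=
      Ioo_mem_nhdsLT (max_lt hz.2 one_pos)
    obtain ⟨x, h1, h2, h3⟩ := (ev1.and (ev2.and ev3)).exists
    have hxz : z < x := (le_max_left _ _).trans_lt h3.1
    have hx0 : 0 < x := (le_max_right _ _).trans_lt h3.1
    have hx1 : x < 1 := h3.2
    have hx : x ∈ Set.Ioo (-1 : ℝ) 1 := ⟨by linarith, hx1⟩
    refine ⟨x, ⟨hxz.le, hx1⟩, ?_⟩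
    have hwb := w_bound h hD hχ hx0.le hx1 (fun y hy =>
      ⟨hpos y ⟨hxz.trans_le hy.1, hy.2.le⟩,
        hm.monotoneOn ⟨hxz.le.trans hy.1, hy.2.le⟩ ⟨hz.2.le, le_rfl⟩ hy.2.le⟩)
    have hwx := hall x ⟨hxz.le, hx1⟩
    have hG := G_pos (c := c) hD hx
    have hs := G_sq (c := c) hD hx
    have hp := pos_p hx
    have hQ := pos_Q (c := c) hD hx
    have hx1' : 0 < 1 - x := by linarith
    have b1 : (1 + x) * (3 / 4) / G c D x ≤ G c D x * ψ x / w x := by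
      rw [div_le_div_iff₀ hG hwx]
      have : G c D x * ψ x * G c D x = G c D x ^ 2 * ψ x := by ring
      rw [this, hs]
      calc (1 + x) * (3 / 4) * w x ≤ (1 + x) * (3 / 4) *
            ((c ^ 2 * (1 - x ^ 2) + D) * ψ 1 * (1 - x)) := by gcongr
        _ = (1 - x ^ 2) * (c ^ 2 * (1 - x ^ 2) + D) * (3 / 4 * ψ 1) := by ring
        _ ≤ _ := by gcongr
    have b2 : B c D x ≤ x / G c D x := by
      unfold B
      rw [div_le_div_iff₀ (by positivity) hG]
      have : x * (2 * G c D x ^ 3) = x * (2 * (G c D x ^ 2)) * G c D x := by ring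
      rw [this, hs]
      have hxD : 0 ≤ x * (1 - x ^ 2) * D * G c D x := by positivity
      nlinarith
    have b3 : |N| + 1 ≤ 1 / 2 / G c D x := by
      rw [le_div_iff₀ hG]
      rw [lt_div_iff₀ (by positivity)] at h2
      linarith
    have b4 : 1 / 2 / G c D x ≤ (1 + x) * (3 / 4) / G c D x - x / G c D x := by
      rw [← sub_div]
      gcongr
      linarith
    have := le_abs_self N
    unfold K
    linarith
  · push Not at hall
    obtain ⟨x1, hx1, hwx1⟩ := hall
    have hzx : Set.Icc z x1 ⊆ Set.Ioo (-1 : ℝ) 1 := fun y hy =>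
      ⟨by linarith [hz.1, hy.1], by linarith [hx1.2, hy.2]⟩
    have hcl : IsClosed (Set.Icc z x1 ∩ w ⁻¹' Set.Iic 0) :=
      (hwc.mono hzx).preimage_isClosed_of_isClosed isClosed_Icc isClosed_Iic
    have hcomp : IsCompact (Set.Icc z x1 ∩ w ⁻¹' Set.Iic 0) :=
      isCompact_Icc.of_isClosed_subset hcl Set.inter_subset_left
    obtain ⟨R, hR, hRl⟩ := hcomp.exists_isLeast ⟨x1, ⟨hx1.1, le_rfl⟩, hwx1⟩
    have hwR : w R ≤ 0 := hR.2
    have hRI : R ∈ Set.Ioo (-1 : ℝ) 1 := hzx hR.1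
    have hzR : z < R := by
      rcases hR.1.1.lt_or_eq with h' | h'
      · exact h'
      · rw [← h'] at hwR; linarith
    have hpos : ∀ x ∈ Set.Ico z R, 0 < w x := by
      intro x hx
      by_contra hcon
      push Not at hcon
      have := hRl ⟨⟨hx.1, hx.2.le.trans hR.1.2⟩, hcon⟩
      linarith [hx.2]
    refine ⟨R, hzR, hRI.2.le, hpos, ?_⟩
    apply half_of_unbdd h hc hD hχ hz.1 hRI.2.le hψ hpos
    intro N
    have hev : ∀ᶠ x in nhdsWithin R (Set.Iio R), x ∈ Set.Ioo z R := Ioo_mem_nhdsLT hzR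
    have hwcR : ContinuousAt w R := (h.dw R hRI).continuousAt
    have hwR0 : w R = 0 := by
      apply le_antisymm hwR
      exact ge_of_tendsto (hwcR.mono_left nhdsWithin_le_nhds)
        (hev.mono fun x hx => (hpos x ⟨hx.1.le, hx.2⟩).le)
    have hψR : 0 < ψ R := by
      rw [← hψ]
      exact psi_mono h hz.1 hRI.2.le hpos ⟨le_rfl, hzR.le⟩ ⟨hzR.le, le_rfl⟩ hzR
    obtain ⟨b', _, hB⟩ := B_deriv (c := c) hD hRI
    have hcont : ContinuousAt (fun x => G c D x * ψ x - (N + B c D x) * w x) R :=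
      (((G_deriv (c := c) hD hRI).continuousAt).mul (h.dpsi R hRI).continuousAt).sub
        ((continuousAt_const.add hB.continuousAt).mul hwcR)
    have hposR : 0 < G c D R * ψ R - (N + B c D R) * w R := by
      rw [hwR0]
      have := mul_pos (G_pos (c := c) hD hRI) hψR
      linarith
    have hev2 : ∀ᶠ x in nhdsWithin R (Set.Iio R), 0 < G c D x * ψ x - (N + B c D x) * w x :=
      (hcont.mono_left nhdsWithin_le_nhds).eventually (lt_mem_nhds hposR)
    obtain ⟨x, h1, h2⟩ := (hev.and hev2).exists
    refine ⟨x, ⟨h1.1.le, h1.2⟩, ?_⟩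
    have hwx := hpos x ⟨h1.1.le, h1.2⟩
    have : N + B c D x ≤ G c D x * ψ x / w x := by
      rw [le_div_iff₀ hwx]; linarith
    unfold K
    linarith

lemma B_odd (c D x : ℝ) : B c D (-x) = -B c D x := by
  simp only [B, G, neg_sq]; ring

lemma sig_odd (c D x : ℝ) : sig c D (-x) = -sig c D x := by
  simp only [sig, arcsin_neg]; ring

lemma gap_pos {c χ D : ℝ} {ψ w : ℝ → ℝ} (h : Sol c χ ψ w) (hc : 0 < c) (hD : 0 < D)
    (hχ : χ ≤ c ^ 2 + D) {z : ℝ} (hz : z ∈ Set.Ioo (-1 : ℝ) 1) (hψ : ψ z = 0)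
    (hw : 0 < w z) :
    ∃ L R, -1 ≤ L ∧ L < z ∧ z < R ∧ R ≤ 1 ∧ (∀ x ∈ Set.Ioo L R, w x ≠ 0) ∧
      π ≤ sig c D R - sig c D L := by
  obtain ⟨R, h1, h2, h3, h4⟩ := half h hc hD hχ hz hψ hw
  have hz' : -z ∈ Set.Ioo (-1 : ℝ) 1 := ⟨by linarith [hz.2], by linarith [hz.1]⟩
  obtain ⟨L, g1, g2, g3, g4⟩ := half h.refl.neg hc hD hχ hz' (by simp [hψ]) (by simpa using hw)
  refine ⟨-L, R, by linarith, by linarith, h1, h2, ?_, ?_⟩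
  · intro x hx
    rcases le_total z x with hzx | hzx
    · exact (h3 x ⟨hzx, hx.2⟩).ne'
    · have := g3 (-x) ⟨by linarith, by linarith [hx.1]⟩
      simp only [neg_neg] at this
      exact this.ne'
  · rw [B_odd, arctan_neg, sig_odd] at g4
    rw [sig_odd]
    linarith

lemma gap {c χ D : ℝ} {ψ w : ℝ → ℝ} (h : Sol c χ ψ w) (hc : 0 < c) (hD : 0 < D)
    (hχ : χ ≤ c ^ 2 + D) {z : ℝ} (hz : z ∈ Set.Ioo (-1 : ℝ) 1) (hψ : ψ z = 0)
    (hw : w z ≠ 0) :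
    ∃ L R, -1 ≤ L ∧ L < z ∧ z < R ∧ R ≤ 1 ∧ (∀ x ∈ Set.Ioo L R, w x ≠ 0) ∧
      π ≤ sig c D R - sig c D L := by
  rcases hw.lt_or_gt with h' | h'
  · obtain ⟨L, R, a1, a2, a3, a4, a5, a6⟩ :=
      gap_pos h.neg hc hD hχ hz (by simp [hψ]) (by simpa using h')
    exact ⟨L, R, a1, a2, a3, a4, fun x hx => by simpa using a5 x hx, a6⟩
  · exact gap_pos h hc hD hχ hz hψ h'

lemma simple_zero {c χ : ℝ} {ψ w : ℝ → ℝ} (h : Sol c χ ψ w)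
    (hfin : {x | x ∈ Set.Ioo (-1 : ℝ) 1 ∧ ψ x = 0}.Finite)
    {z : ℝ} (hz : z ∈ Set.Ioo (-1 : ℝ) 1) (hψ : ψ z = 0) : w z ≠ 0 := by
  intro hw
  set t := (z + 1) / 2 with ht
  have hzt : z < t := by linarith [hz.2]
  have hsub : Set.Icc z t ⊆ Set.Ioo (-1 : ℝ) 1 := fun y hy =>
    ⟨by linarith [hz.1, hy.1], by linarith [hz.2, hy.2]⟩
  have hcont : ContinuousOn (fun x : ℝ => 1 / (1 - x ^ 2) - (χ - c ^ 2 * x ^ 2)) (Set.Icc z t) := by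
    apply ContinuousOn.sub
    · apply ContinuousOn.div continuousOn_const (by fun_prop)
      intro x hx
      exact (pos_p (hsub hx)).ne'
    · fun_prop
  obtain ⟨C, hC⟩ := isCompact_Icc.exists_bound_of_continuousOn hcont
  have hd : ∀ x ∈ Set.Icc z t, HasDerivAt (fun x => (ψ x ^ 2 + w x ^ 2) * Real.exp (-C * x))
      ((2 * ψ x * (w x / (1 - x ^ 2)) + 2 * w x * (-(χ - c ^ 2 * x ^ 2) * ψ x)) * Real.exp (-C * x)
        + (ψ x ^ 2 + w x ^ 2) * (Real.exp (-C * x) * (-C))) x := by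
    intro x hx
    have h1 := (h.dpsi x (hsub hx)).pow 2
    have h2 := (h.dw x (hsub hx)).pow 2
    have h3 : HasDerivAt (fun x => Real.exp (-C * x)) (Real.exp (-C * x) * (-C)) x := by
      have := ((hasDerivAt_id x).const_mul (-C)).exp
      refine this.congr_deriv ?_
      simp
    refine ((h1.add h2).mul h3).congr_deriv ?_
    simp
  have hanti : AntitoneOn (fun x => (ψ x ^ 2 + w x ^ 2) * Real.exp (-C * x)) (Set.Icc z t) := by
    apply antitoneOn_of_deriv_nonpos (convex_Icc z t)
    · exact fun y hy => (hd y hy).continuousAt.continuousWithinAt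
    · exact fun y hy => (hd y (interior_subset hy)).differentiableAt.differentiableWithinAt
    · intro y hy
      have hy := interior_subset hy
      rw [(hd y hy).deriv]
      have hCy := hC y hy
      rw [Real.norm_eq_abs] at hCy
      have e : (2 * ψ y * (w y / (1 - y ^ 2)) + 2 * w y * (-(χ - c ^ 2 * y ^ 2) * ψ y)) *
          Real.exp (-C * y) + (ψ y ^ 2 + w y ^ 2) * (Real.exp (-C * y) * (-C)) =
          -(Real.exp (-C * y) * (C * (ψ y ^ 2 + w y ^ 2) - 2 * (ψ y * w y) *
            (1 / (1 - y ^ 2) - (χ - c ^ 2 * y ^ 2)))) := by ring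
      rw [e]
      apply neg_nonpos.2
      apply mul_nonneg (Real.exp_pos _).le
      obtain ⟨c1, c2⟩ := abs_le.1 hCy
      set s := 1 / (1 - y ^ 2) - (χ - c ^ 2 * y ^ 2)
      nlinarith [mul_nonneg (by linarith : 0 ≤ C - s) (sq_nonneg (ψ y + w y)),
        mul_nonneg (by linarith : 0 ≤ C + s) (sq_nonneg (ψ y - w y))]
  have hinf : (Set.Icc z t).Infinite := Set.Icc_infinite hzt
  apply hinf
  apply hfin.subset
  intro x hx
  refine ⟨hsub hx, ?_⟩
  have h1 := hanti ⟨le_rfl, hzt.le⟩ hx hx.1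
  simp only [hψ, hw] at h1
  have h2 := Real.exp_pos (-C * x)
  have h3 : ψ x ^ 2 + w x ^ 2 ≤ 0 := by
    by_contra hcon
    push Not at hcon
    have := mul_pos hcon h2
    simp only [neg_mul] at h1 this
    norm_num at h1
    linarith
  nlinarith [sq_nonneg (ψ x), sq_nonneg (w x)]

lemma count {c χ D : ℝ} {ψ w : ℝ → ℝ} (h : Sol c χ ψ w) (hc : 0 < c) (hD : 0 < D)
    (hχ : χ ≤ c ^ 2 + D)
    (hfin : {x | x ∈ Set.Ioo (-1 : ℝ) 1 ∧ ψ x = 0}.Finite) :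
    ({x | x ∈ Set.Ioo (-1 : ℝ) 1 ∧ ψ x = 0}.ncard : ℝ) * π ≤ 2 * c + √D * π := by
  have hg : ∀ z : {x // x ∈ Set.Ioo (-1 : ℝ) 1 ∧ ψ x = 0},
    ∃ L R, -1 ≤ L ∧ L < z.1 ∧ z.1 < R ∧ R ≤ 1 ∧ (∀ x ∈ Set.Ioo L R, w x ≠ 0) ∧
      π ≤ sig c D R - sig c D L := fun z =>
    gap h hc hD hχ z.2.1 z.2.2 (simple_zero h hfin z.2.1 z.2.2)
  choose L R g1 g2 g3 g4 g5 g6 using hg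
  have hsep : ∀ a b : {x // x ∈ Set.Ioo (-1 : ℝ) 1 ∧ ψ x = 0}, a < b → R a ≤ L b := by
    intro a b hab
    have hab' : a.1 < b.1 := hab
    have hsub : Set.Icc a.1 b.1 ⊆ Set.Ioo (-1 : ℝ) 1 := fun y hy =>
      ⟨by linarith [a.2.1.1, hy.1], by linarith [b.2.1.2, hy.2]⟩
    obtain ⟨ξ, hξ, hd⟩ := exists_hasDerivAt_eq_zero hab'
      (h.cont.mono (hsub.trans Set.Ioo_subset_Icc_self)) (a.2.2.trans b.2.2.symm)
      (fun x hx => h.dpsi x (hsub ⟨hx.1.le, hx.2.le⟩))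
    have hw : w ξ = 0 := by
      rcases div_eq_zero_iff.1 hd with h' | h'
      · exact h'
      · exact absurd h' (pos_p (hsub ⟨hξ.1.le, hξ.2.le⟩)).ne'
    have h1 : R a ≤ ξ := by
      by_contra hcon
      push Not at hcon
      exact g5 a ξ ⟨(g2 a).trans hξ.1, hcon⟩ hw
    have h2 : ξ ≤ L b := by
      by_contra hcon
      push Not at hcon
      exact g5 b ξ ⟨hcon, hξ.2.trans (g3 b)⟩ hw
    exact h1.trans h2
  have hind : ∀ S : Finset {x // x ∈ Set.Ioo (-1 : ℝ) 1 ∧ ψ x = 0}, ∀ y : ℝ, -1 ≤ y →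
      (∀ z ∈ S, R z ≤ y) → (S.card : ℝ) * π ≤ sig c D y - sig c D (-1) := by
    intro S
    induction S using Finset.induction_on_max with
    | empty =>
      intro y hy _
      have := sig_mono (c := c) (D := D) hc hy
      simp only [Finset.card_empty, Nat.cast_zero, zero_mul]
      linarith
    | insert a S ha ih =>
      intro y hy hS
      have hna : a ∉ S := fun hmem => lt_irrefl _ (ha a hmem)
      rw [Finset.card_insert_of_notMem hna]
      have h1 := ih (L a) (g1 a) (fun z hz => hsep z a (ha z hz))
      have h2 := g6 a
      have h3 := sig_mono (c := c) (D := D) hc (hS a (Finset.mem_insert_self a S))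
      push_cast
      linarith
  have : Fintype {x // x ∈ Set.Ioo (-1 : ℝ) 1 ∧ ψ x = 0} := hfin.fintype
  have h1 := hind Finset.univ 1 (by norm_num) (fun z _ => g4 z)
  have h2 : {x | x ∈ Set.Ioo (-1 : ℝ) 1 ∧ ψ x = 0}.ncard =
      (Finset.univ : Finset {x // x ∈ Set.Ioo (-1 : ℝ) 1 ∧ ψ x = 0}).card := by
    rw [Finset.card_univ, ← Nat.card_eq_fintype_card]
    rfl
  rw [h2]
  refine h1.trans_eq ?_
  simp only [sig, arcsin_one, arcsin_neg]
  ring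

end PSWFaux

theorem stmt5 (c : ℝ) (hc : 0 < c) (n : ℕ) (hn : 0 < n)
    (hnlow : (n : ℝ) > 2 * c / π + Real.sqrt 42)
    (ψ : ℝ → ℝ) (χ : ℝ) (lam : ℂ)
    (hpswf : IsPSWF c n ψ χ lam) :
    χ > c ^ 2 + 42 ∧
      ∀ k₀ : ℕ,
        IsGreatest {k : ℕ | 1 ≤ k ∧ 2 * (k : ℝ) * (2 * (k : ℝ) + 1) < χ - c ^ 2} k₀ →
        2 < k₀ := by
  have hmain : χ > c ^ 2 + 42 := by
    obtain ⟨h1, h2, h3, h4, h5, -, -⟩ := hpswf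
    by_contra hcon
    push Not at hcon
    have hsol : PSWFaux.Sol c χ ψ (fun x => (1 - x ^ 2) * deriv ψ x) := by
      refine ⟨h1, ?_, ?_⟩
      · intro x hx
        refine (h2 x hx).1.hasDerivAt.congr_deriv ?_
        have := PSWFaux.pos_p hx
        field_simp
      · intro x hx
        have h6 : HasDerivAt (fun x : ℝ => 1 - x ^ 2) (-(2 * x)) x := by
          refine ((hasDerivAt_pow 2 x).const_sub 1).congr_deriv ?_
          norm_num
        refine (h6.mul (h2 x hx).2.hasDerivAt).congr_deriv ?_
        have := h3 x hx
        linarith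
    have hcount := PSWFaux.count hsol hc (by norm_num : (0 : ℝ) < 42) hcon h4
    rw [h5] at hcount
    have hpi := Real.pi_pos
    have h7 : (2 * c / π + √42) * π < n * π := mul_lt_mul_of_pos_right hnlow hpi
    have h8 : (2 * c / π + √42) * π = 2 * c + √42 * π := by field_simp
    linarith
  refine ⟨hmain, ?_⟩
  intro k₀ hk
  have h3 : 3 ≤ k₀ := hk.2 ⟨by norm_num, by push_cast; linarith⟩
  omega
end

section
/- Let c > 0 be a real number, let δ be a real number with 0 < δ < (5π/4)·c, and let n be a positive integer with n > 2c/π + (2/π²)·δ·log(4·e·π·c/δ). Let ψ be the n-th PSWF with band limit c, with ODE eigenvalue χ_n. Then χ_n > c² + (4/π)·δ·c. -/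
open Real

/-- First-order form of the prolate equation. -/
def Sol (c χ : ℝ) (ψ w : ℝ → ℝ) : Prop :=
  ContinuousOn ψ (Set.Icc (-1) 1) ∧ ContinuousOn w (Set.Icc (-1) 1) ∧
  (∀ x ∈ Set.Ioo (-1 : ℝ) 1, HasDerivAt ψ (w x / (1 - x ^ 2)) x) ∧
  (∀ x ∈ Set.Ioo (-1 : ℝ) 1, HasDerivAt w (-((χ - c ^ 2 * x ^ 2) * ψ x)) x) ∧
  w 1 = 0 ∧ w (-1) = 0

theorem Sol.neg {c χ : ℝ} {ψ w : ℝ → ℝ} (h : Sol c χ ψ w) :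
    Sol c χ (fun x => -ψ x) (fun x => -w x) := by
  obtain ⟨h1, h2, h3, h4, h5, h6⟩ := h
  refine ⟨h1.neg, h2.neg, ?_, ?_, by simp [h5], by simp [h6]⟩
  · intro x hx
    exact (h3 x hx).neg.congr_deriv (by ring)
  · intro x hx
    exact (h4 x hx).neg.congr_deriv (by ring)

theorem Sol.refl {c χ : ℝ} {ψ w : ℝ → ℝ} (h : Sol c χ ψ w) :
    Sol c χ (fun x => -ψ (-x)) (fun x => w (-x)) := by
  obtain ⟨h1, h2, h3, h4, h5, h6⟩ := h
  have hm : Set.MapsTo (fun x : ℝ => -x) (Set.Icc (-1) 1) (Set.Icc (-1) 1) := by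
    intro x hx
    simp only [Set.mem_Icc] at *
    constructor <;> linarith [hx.1, hx.2]
  have hm' : ∀ x ∈ Set.Ioo (-1 : ℝ) 1, -x ∈ Set.Ioo (-1 : ℝ) 1 := by
    intro x hx
    simp only [Set.mem_Ioo] at *
    constructor <;> linarith [hx.1, hx.2]
  refine ⟨(h1.comp continuousOn_neg hm).neg, h2.comp continuousOn_neg hm, ?_, ?_, h6, by simpa using h5⟩
  · intro x hx
    have := ((h3 (-x) (hm' x hx)).scomp x (hasDerivAt_neg x)).neg
    exact this.congr_deriv (by simp)
  · intro x hx
    have := ((h4 (-x) (hm' x hx)).scomp x (hasDerivAt_neg x))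
    exact this.congr_deriv (by simp)

/-- regularity at the right end. -/
theorem end_limit_aux {ψ w : ℝ → ℝ} (h1 : ContinuousOn ψ (Set.Icc (-1) 1))
    (h3 : ∀ x ∈ Set.Ioo (-1 : ℝ) 1, HasDerivAt ψ (w x / (1 - x ^ 2)) x)
    {l : ℝ} (hl : 0 < l) (hw : Filter.Tendsto w (nhdsWithin 1 (Set.Iio 1)) (nhds l)) : False := by
  have hev : ∀ᶠ x in nhdsWithin (1:ℝ) (Set.Iio 1), l / 2 < w x :=
    hw.eventually (lt_mem_nhds (by linarith))
  obtain ⟨a, ha, hsub⟩ := mem_nhdsLT_iff_exists_Ioo_subset.mp hev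
  simp only [Set.mem_Iio] at ha
  obtain ⟨M, hM⟩ := isCompact_Icc.exists_bound_of_continuousOn h1
  set b := max a 0 with hb
  have hb1 : b < 1 := max_lt ha one_pos
  have hb0 : 0 ≤ b := le_max_right _ _
  have hba : a ≤ b := le_max_left _ _
  set d := (b + 1) / 2 with hd
  have hd1 : d < 1 := by rw [hd]; linarith
  have hdb : b < d := by rw [hd]; linarith
  have hder : ∀ x ∈ Set.Ico d 1, HasDerivAt (fun x => ψ x + l / 4 * Real.log (1 - x))
      (w x / (1 - x ^ 2) + l / 4 * (-1 / (1 - x))) x := by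
    intro x hx
    have hx1 : x < 1 := hx.2
    have hx0 : d ≤ x := hx.1
    refine (h3 x ⟨by linarith, hx1⟩).add (HasDerivAt.const_mul _ ?_)
    exact HasDerivAt.log ((hasDerivAt_id x).const_sub 1) (by simp; linarith)
  have hmono : MonotoneOn (fun x => ψ x + l / 4 * Real.log (1 - x)) (Set.Ico d 1) := by
    apply monotoneOn_of_deriv_nonneg (convex_Ico d 1)
    · intro x hx
      exact (hder x hx).continuousAt.continuousWithinAt
    · intro x hx
      rw [interior_Ico] at hx
      exact (hder x ⟨hx.1.le, hx.2⟩).differentiableAt.differentiableWithinAt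
    · intro x hx
      rw [interior_Ico] at hx
      rw [(hder x ⟨hx.1.le, hx.2⟩).deriv]
      have hx1 : x < 1 := hx.2
      have hx0 : d < x := hx.1
      have hwx : l / 2 < w x := hsub ⟨by linarith, hx1⟩
      have hp : 0 < 1 - x := by linarith
      have hq : 0 < 1 + x := by linarith
      have : w x / (1 - x ^ 2) + l / 4 * (-1 / (1 - x)) = (w x - l / 4 * (1 + x)) / (1 - x ^ 2) := by
        have : 1 - x ^ 2 = (1 - x) * (1 + x) := by ring
        rw [this]
        field_simp
        ring
      rw [this]
      apply div_nonneg
      · nlinarith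
      · nlinarith
  have hlog : Filter.Tendsto (fun x : ℝ => Real.log (1 - x)) (nhdsWithin 1 (Set.Iio 1)) Filter.atBot := by
    apply Real.tendsto_log_nhdsGT_zero.comp
    rw [tendsto_nhdsWithin_iff]
    constructor
    · have : Filter.Tendsto (fun x : ℝ => 1 - x) (nhds 1) (nhds (1 - 1)) :=
        (continuous_const.sub continuous_id).tendsto 1
      rw [sub_self] at this
      exact this.mono_left nhdsWithin_le_nhds
    · filter_upwards [self_mem_nhdsWithin] with x hx
      simp only [Set.mem_Iio, Set.mem_Ioi] at *
      linarith
  set C := ψ d + l / 4 * Real.log (1 - d) with hC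
  have e1 := hlog.eventually (Filter.eventually_lt_atBot ((C - M) / (l / 4)))
  have e2 : ∀ᶠ x in nhdsWithin (1:ℝ) (Set.Iio 1), x ∈ Set.Ioo d 1 := Ioo_mem_nhdsLT hd1
  obtain ⟨x, hx1, hx2⟩ := (e1.and e2).exists
  have h5 := hmono ⟨le_refl d, hd1⟩ ⟨hx2.1.le, hx2.2⟩ hx2.1.le
  simp only at h5
  have h6 := hM x ⟨by linarith [hx2.1], hx2.2.le⟩
  rw [Real.norm_eq_abs] at h6
  have h7 := (abs_le.mp h6).2
  rw [lt_div_iff₀ (by linarith)] at hx1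
  linarith

theorem end_limit {c χ : ℝ} {ψ w : ℝ → ℝ} (h1 : ContinuousOn ψ (Set.Icc (-1) 1))
    (h3 : ∀ x ∈ Set.Ioo (-1 : ℝ) 1, HasDerivAt ψ (w x / (1 - x ^ 2)) x)
    (h4 : ∀ x ∈ Set.Ioo (-1 : ℝ) 1, HasDerivAt w (-((χ - c ^ 2 * x ^ 2) * ψ x)) x) :
    Filter.Tendsto w (nhdsWithin 1 (Set.Iio 1)) (nhds 0) := by
  have h11 : (-1:ℝ) ≤ 1 := by norm_num
  set g : ℝ → ℝ := fun x => (χ - c ^ 2 * x ^ 2) * Set.IccExtend h11 (Set.domRestrict (Set.Icc (-1:ℝ) 1) ψ) x with hg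
  have hgc : Continuous g := by
    apply Continuous.mul (by fun_prop)
    exact (continuousOn_iff_continuous_domRestrict.mp h1).Icc_extend'
  have hgF : ∀ x, HasDerivAt (fun x => ∫ t in (0:ℝ)..x, g t) (g x) x := fun x =>
    intervalIntegral.integral_hasDerivAt_right (hgc.intervalIntegrable _ _)
      (hgc.stronglyMeasurableAtFilter _ _) hgc.continuousAt
  have hgx : ∀ x ∈ Set.Ioo (-1 : ℝ) 1, g x = (χ - c ^ 2 * x ^ 2) * ψ x := by
    intro x hx
    simp only [hg]
    rw [Set.IccExtend_of_mem h11 _ ⟨hx.1.le, hx.2.le⟩]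
    rfl
  have hsum : ∀ x ∈ Set.Ioo (-1 : ℝ) 1, HasDerivAt (fun x => w x + ∫ t in (0:ℝ)..x, g t) 0 x := by
    intro x hx
    exact ((h4 x hx).add (hgF x)).congr_deriv (by rw [hgx x hx]; ring)
  obtain ⟨k, hk⟩ := IsOpen.exists_is_const_of_deriv_eq_zero (𝕜 := ℝ) isOpen_Ioo isPreconnected_Ioo
    (fun x hx => (hsum x hx).differentiableAt.differentiableWithinAt)
    (fun x hx => (hsum x hx).deriv)
  have hlim : Filter.Tendsto (fun x => k - ∫ t in (0:ℝ)..x, g t) (nhdsWithin 1 (Set.Iio 1))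
      (nhds (k - ∫ t in (0:ℝ)..1, g t)) :=
    (((hgF 1).continuousAt.tendsto).const_sub k).mono_left nhdsWithin_le_nhds
  have hw : Filter.Tendsto w (nhdsWithin 1 (Set.Iio 1)) (nhds (k - ∫ t in (0:ℝ)..1, g t)) := by
    refine hlim.congr' ?_
    have : ∀ᶠ x in nhdsWithin (1:ℝ) (Set.Iio 1), x ∈ Set.Ioo (-1) 1 := Ioo_mem_nhdsLT (by norm_num)
    filter_upwards [this] with x hx
    have : w x + (∫ t in (0:ℝ)..x, g t) = k := hk x hx
    linarith
  generalize (k - ∫ t in (0:ℝ)..1, g t) = l at hw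
  rcases lt_trichotomy l 0 with hl | hl | hl
  · exfalso
    refine end_limit_aux (ψ := fun x => -ψ x) (w := fun x => -w x) h1.neg ?_ (neg_pos.mpr hl) hw.neg
    intro x hx
    exact (h3 x hx).neg.congr_deriv (by ring)
  · rwa [hl] at hw
  · exact (end_limit_aux h1 h3 hl hw).elim

theorem sol_of_ode {c χ : ℝ} {ψ : ℝ → ℝ} (h1 : ContinuousOn ψ (Set.Icc (-1) 1))
    (hd : ∀ x ∈ Set.Ioo (-1 : ℝ) 1, DifferentiableAt ℝ ψ x ∧ DifferentiableAt ℝ (deriv ψ) x)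
    (hode : ∀ x ∈ Set.Ioo (-1 : ℝ) 1,
    (1 - x ^ 2) * deriv (deriv ψ) x - 2 * x * deriv ψ x + (χ - c ^ 2 * x ^ 2) * ψ x = 0) :
    Sol c χ ψ (fun x => (1 - x ^ 2) * deriv ψ x) := by
  have h3 : ∀ x ∈ Set.Ioo (-1 : ℝ) 1, HasDerivAt ψ ((1 - x ^ 2) * deriv ψ x / (1 - x ^ 2)) x := by
    intro x hx
    have : (1 - x ^ 2) ≠ 0 := by nlinarith [hx.1, hx.2]
    rw [mul_div_cancel_left₀ _ this]
    exact (hd x hx).1.hasDerivAt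
  have h4 : ∀ x ∈ Set.Ioo (-1 : ℝ) 1, HasDerivAt (fun x => (1 - x ^ 2) * deriv ψ x)
      (-((χ - c ^ 2 * x ^ 2) * ψ x)) x := by
    intro x hx
    have := ((hasDerivAt_pow 2 x).const_sub 1).mul (hd x hx).2.hasDerivAt
    refine this.congr_deriv ?_
    have := hode x hx
    simp
    linarith
  have hm' : ∀ x ∈ Set.Ioo (-1 : ℝ) 1, -x ∈ Set.Ioo (-1 : ℝ) 1 := by
    intro x hx
    simp only [Set.mem_Ioo] at *
    constructor <;> linarith [hx.1, hx.2]
  have hm : Set.MapsTo (fun x : ℝ => -x) (Set.Icc (-1) 1) (Set.Icc (-1) 1) := by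
    intro x hx
    simp only [Set.mem_Icc] at *
    constructor <;> linarith [hx.1, hx.2]
  have e1 := end_limit (w := fun x => (1 - x ^ 2) * deriv ψ x) h1 h3 h4
  have e2 : Filter.Tendsto (fun x : ℝ => (1 - (-x) ^ 2) * deriv ψ (-x)) (nhdsWithin 1 (Set.Iio 1)) (nhds 0) := by
    refine end_limit (c := c) (χ := χ) (ψ := fun x => -ψ (-x)) (w := fun x => (1 - (-x) ^ 2) * deriv ψ (-x)) (h1.comp continuousOn_neg hm).neg ?_ ?_
    · intro x hx
      have := ((h3 (-x) (hm' x hx)).scomp x (hasDerivAt_neg x)).neg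
      exact this.congr_deriv (by simp)
    · intro x hx
      have := ((h4 (-x) (hm' x hx)).scomp x (hasDerivAt_neg x))
      exact this.congr_deriv (by simp)
  refine ⟨h1, ?_, h3, h4, by simp, by simp⟩
  intro x hx
  rcases eq_or_lt_of_le hx.2 with hx1 | hx1
  · rw [hx1]
    rw [ContinuousWithinAt]
    have : Set.Icc (-1:ℝ) 1 = insert 1 (Set.Ico (-1) 1) := by
      rw [Set.Ico_insert_right (by norm_num)]
    rw [this, nhdsWithin_insert]
    simp only [Filter.tendsto_sup]
    constructor
    · exact tendsto_pure_nhds _ _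
    · norm_num
      exact e1
  rcases eq_or_lt_of_le hx.1 with hx2 | hx2
  · rw [← hx2]
    rw [ContinuousWithinAt]
    have : Set.Icc (-1:ℝ) 1 = insert (-1) (Set.Ioc (-1) 1) := by
      rw [Set.Ioc_insert_left (by norm_num)]
    rw [this, nhdsWithin_insert]
    simp only [Filter.tendsto_sup]
    constructor
    · exact tendsto_pure_nhds _ _
    · norm_num
      have hneg : Filter.Tendsto (fun x : ℝ => -x) (nhdsWithin (-1) (Set.Ioi (-1))) (nhdsWithin 1 (Set.Iio 1)) := by
        have := tendsto_neg_nhdsGT (a := (-1 : ℝ))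
        simpa using this
      have := e2.comp hneg
      refine this.congr ?_
      intro x; simp
  · exact (h4 x ⟨hx2, hx1⟩).continuousAt.continuousWithinAt

/-- Nontrivial solutions have simple zeros. -/
theorem Sol.ne_zero {c χ : ℝ} {ψ w : ℝ → ℝ} (h : Sol c χ ψ w)
    (hfin : {x | x ∈ Set.Ioo (-1 : ℝ) 1 ∧ ψ x = 0}.Finite) {z : ℝ} (hz : z ∈ Set.Ioo (-1 : ℝ) 1)
    (hψ : ψ z = 0) : w z ≠ 0 := by
  intro hw
  obtain ⟨h1, h2, h3, h4, h5, h6⟩ := h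
  set y := (z + 1) / 2 with hy
  have hzy : z < y := by rw [hy]; linarith [hz.2]
  have hy1 : y < 1 := by rw [hy]; linarith [hz.2]
  have hin : ∀ x ∈ Set.Icc z y, x ∈ Set.Ioo (-1:ℝ) 1 := fun x hx =>
    ⟨lt_of_lt_of_le hz.1 hx.1, lt_of_le_of_lt hx.2 hy1⟩
  have hcont : ContinuousOn (fun x : ℝ => 1 / (1 - x ^ 2) - (χ - c ^ 2 * x ^ 2)) (Set.Icc z y) := by
    apply ContinuousOn.sub
    · apply ContinuousOn.div (by fun_prop) (by fun_prop)
      intro x hx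
      have := hin x hx
      nlinarith [this.1, this.2]
    · fun_prop
  obtain ⟨K, hK⟩ := isCompact_Icc.exists_bound_of_continuousOn hcont
  have hder : ∀ x ∈ Set.Icc z y, HasDerivAt (fun x => (ψ x ^ 2 + w x ^ 2) * Real.exp (-K * x))
      ((2 * ψ x * (w x / (1 - x ^ 2)) + 2 * w x * (-((χ - c ^ 2 * x ^ 2) * ψ x))) * Real.exp (-K * x)
        + (ψ x ^ 2 + w x ^ 2) * (Real.exp (-K * x) * (-K))) x := by
    intro x hx
    have a1 := (h3 x (hin x hx)).pow 2
    have a2 := (h4 x (hin x hx)).pow 2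
    have a3 : HasDerivAt (fun x => Real.exp (-K * x)) (Real.exp (-K * x) * (-K)) x := by
      apply HasDerivAt.exp
      exact ((hasDerivAt_id x).const_mul (-K)).congr_deriv (by simp)
    exact ((a1.add a2).mul a3).congr_deriv (by simp)
  have hanti : AntitoneOn (fun x => (ψ x ^ 2 + w x ^ 2) * Real.exp (-K * x)) (Set.Icc z y) := by
    apply antitoneOn_of_deriv_nonpos (convex_Icc z y)
    · intro x hx
      exact (hder x hx).continuousAt.continuousWithinAt
    · intro x hx
      rw [interior_Icc] at hx
      exact (hder x ⟨hx.1.le, hx.2.le⟩).differentiableAt.differentiableWithinAt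
    · intro x hx
      rw [interior_Icc] at hx
      rw [(hder x ⟨hx.1.le, hx.2.le⟩).deriv]
      have hk := hK x ⟨hx.1.le, hx.2.le⟩
      rw [Real.norm_eq_abs] at hk
      set r := 1 / (1 - x ^ 2) - (χ - c ^ 2 * x ^ 2) with hr
      have e : (2 * ψ x * (w x / (1 - x ^ 2)) + 2 * w x * (-((χ - c ^ 2 * x ^ 2) * ψ x))) * Real.exp (-K * x)
        + (ψ x ^ 2 + w x ^ 2) * (Real.exp (-K * x) * (-K)) =
        Real.exp (-K * x) * (2 * (ψ x * w x) * r - K * (ψ x ^ 2 + w x ^ 2)) := by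
        rw [hr]; ring
      rw [e]
      apply mul_nonpos_of_nonneg_of_nonpos (Real.exp_pos _).le
      have h8 := abs_le.mp hk
      have e : 2 * (ψ x * w x) * r - K * (ψ x ^ 2 + w x ^ 2) =
        -((K - r) * (ψ x + w x) ^ 2 / 2 + (K + r) * (ψ x - w x) ^ 2 / 2) := by ring
      rw [e]
      have : 0 ≤ (K - r) * (ψ x + w x) ^ 2 := mul_nonneg (by linarith) (sq_nonneg _)
      have : 0 ≤ (K + r) * (ψ x - w x) ^ 2 := mul_nonneg (by linarith) (sq_nonneg _)
      linarith
  have hzero : Set.Icc z y ⊆ {x | x ∈ Set.Ioo (-1 : ℝ) 1 ∧ ψ x = 0} := by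
    intro x hx
    refine ⟨hin x hx, ?_⟩
    have := hanti ⟨le_refl z, hzy.le⟩ hx hx.1
    simp only [hψ, hw] at this
    have h9 : (ψ x ^ 2 + w x ^ 2) ≤ 0 := by
      by_contra hcon
      push Not at hcon
      have := mul_pos hcon (Real.exp_pos (-K * x))
      norm_num at *
      linarith
    have : ψ x ^ 2 = 0 := le_antisymm (by nlinarith [sq_nonneg (w x)]) (sq_nonneg _)
    exact pow_eq_zero_iff (two_ne_zero) |>.mp this
  exact (Set.Icc_infinite hzy) (hfin.subset hzero)

/-- pointwise weight -/
noncomputable def KK (c X x : ℝ) : ℝ :=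
  x * ((X - c ^ 2 * x ^ 2) + c ^ 2 * (1 - x ^ 2)) /
    (2 * (X - c ^ 2 * x ^ 2) * √((1 - x ^ 2) * (X - c ^ 2 * x ^ 2)))

noncomputable def phase (c X x : ℝ) : ℝ :=
  ∫ u in (0:ℝ)..(Real.arcsin x), √(X - c ^ 2 * (Real.sin u) ^ 2)

theorem phase_continuous (c X : ℝ) : Continuous (phase c X) := by
  have hc : Continuous (fun u : ℝ => √(X - c ^ 2 * (Real.sin u) ^ 2)) := by fun_prop
  have := intervalIntegral.continuous_primitive (μ := MeasureTheory.volume) (fun a b => hc.intervalIntegrable a b) 0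
  exact this.comp Real.continuous_arcsin

theorem phase_neg (c X x : ℝ) : phase c X (-x) = - phase c X x := by
  unfold phase
  rw [Real.arcsin_neg]
  have := intervalIntegral.integral_comp_neg (a := 0) (b := Real.arcsin x) (fun u : ℝ => √(X - c ^ 2 * (Real.sin u) ^ 2))
  simp only [Real.sin_neg, neg_zero, neg_sq] at this
  rw [this, intervalIntegral.integral_symm]

theorem phase_mono (c X : ℝ) : Monotone (phase c X) := by
  intro x y hxy
  have hc : Continuous (fun u : ℝ => √(X - c ^ 2 * (Real.sin u) ^ 2)) := by fun_prop
  unfold phase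
  rw [← sub_nonneg, intervalIntegral.integral_interval_sub_left (hc.intervalIntegrable _ _) (hc.intervalIntegrable _ _)]
  exact intervalIntegral.integral_nonneg (Real.monotone_arcsin hxy) (fun u _ => Real.sqrt_nonneg _)

theorem phase_deriv (c X : ℝ) {x : ℝ} (hx : x ∈ Set.Ioo (-1:ℝ) 1) :
    HasDerivAt (phase c X) (√((1 - x ^ 2) * (X - c ^ 2 * x ^ 2)) / (1 - x ^ 2)) x := by
  have hc : Continuous (fun u : ℝ => √(X - c ^ 2 * (Real.sin u) ^ 2)) := by fun_prop
  have h1 : HasDerivAt (fun y => ∫ u in (0:ℝ)..y, √(X - c ^ 2 * (Real.sin u) ^ 2))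
     (√(X - c ^ 2 * (Real.sin (Real.arcsin x)) ^ 2)) (Real.arcsin x) :=
    intervalIntegral.integral_hasDerivAt_right (hc.intervalIntegrable _ _)
      (hc.stronglyMeasurableAtFilter _ _) hc.continuousAt
  have h2 := Real.hasDerivAt_arcsin (x := x) (by linarith [hx.1]) (by linarith [hx.2])
  refine (h1.comp x h2).congr_deriv ?_
  rw [Real.sin_arcsin hx.1.le hx.2.le]
  have hp : 0 < 1 - x ^ 2 := by nlinarith [hx.1, hx.2]
  rw [Real.sqrt_mul hp.le]
  have : √(1 - x ^ 2) * √(1 - x ^ 2) = 1 - x ^ 2 := Real.mul_self_sqrt hp.le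
  have h0 : √(1 - x ^ 2) ≠ 0 := (Real.sqrt_pos.mpr hp).ne'
  rw [mul_one_div, div_eq_div_iff h0 hp.ne']
  linear_combination (-√(X - c ^ 2 * x ^ 2)) * this

theorem KK_neg (c X x : ℝ) : KK c X (-x) = - KK c X x := by
  unfold KK
  rw [neg_sq]; ring

theorem S_deriv {c X : ℝ} (hX : c ^ 2 < X) {x : ℝ} (hx : x ∈ Set.Ioo (-1:ℝ) 1) :
    HasDerivAt (fun x => √((1 - x ^ 2) * (X - c ^ 2 * x ^ 2)))
      (-(x * ((X - c ^ 2 * x ^ 2) + c ^ 2 * (1 - x ^ 2)) / √((1 - x ^ 2) * (X - c ^ 2 * x ^ 2)))) x := by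
  have hp : 0 < 1 - x ^ 2 := by nlinarith [hx.1, hx.2]
  have hq : 0 < X - c ^ 2 * x ^ 2 := by nlinarith [sq_nonneg c]
  have h1 : HasDerivAt (fun x : ℝ => 1 - x ^ 2) (-(2 * x)) x :=
    ((hasDerivAt_pow 2 x).const_sub 1).congr_deriv (by simp)
  have h2 : HasDerivAt (fun x : ℝ => X - c ^ 2 * x ^ 2) (-(c ^ 2 * (2 * x))) x :=
    (((hasDerivAt_pow 2 x).const_mul (c ^ 2)).const_sub X).congr_deriv (by simp)
  have h3 := (h1.mul h2).sqrt (mul_pos hp hq).ne'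
  refine h3.congr_deriv ?_
  simp only [Pi.mul_apply]
  have : √((1 - x ^ 2) * (X - c ^ 2 * x ^ 2)) ≠ 0 := (Real.sqrt_pos.mpr (mul_pos hp hq)).ne'
  field_simp
  ring

theorem KK_deriv {c X : ℝ} (hX : c ^ 2 < X) {x : ℝ} (hx : x ∈ Set.Ioo (-1:ℝ) 1) :
    ∃ k, 0 ≤ k ∧ HasDerivAt (KK c X) k x := by
  have hp : 0 < 1 - x ^ 2 := by nlinarith [hx.1, hx.2]
  have hq : 0 < X - c ^ 2 * x ^ 2 := by nlinarith [sq_nonneg c]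
  have hqp : c ^ 2 * (1 - x ^ 2) ≤ X - c ^ 2 * x ^ 2 := by nlinarith
  have hS := S_deriv hX hx
  have hSp : 0 < √((1 - x ^ 2) * (X - c ^ 2 * x ^ 2)) := Real.sqrt_pos.mpr (mul_pos hp hq)
  have hSS : √((1 - x ^ 2) * (X - c ^ 2 * x ^ 2)) ^ 2 = (1 - x ^ 2) * (X - c ^ 2 * x ^ 2) :=
    Real.sq_sqrt (mul_pos hp hq).le
  have h1 : HasDerivAt (fun x : ℝ => 1 - x ^ 2) (-(2 * x)) x :=
    ((hasDerivAt_pow 2 x).const_sub 1).congr_deriv (by simp)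
  have h2 : HasDerivAt (fun x : ℝ => X - c ^ 2 * x ^ 2) (-(c ^ 2 * (2 * x))) x :=
    (((hasDerivAt_pow 2 x).const_mul (c ^ 2)).const_sub X).congr_deriv (by simp)
  have hnum := (hasDerivAt_id x).mul (h2.add (h1.const_mul (c ^ 2)))
  have hden := (h2.const_mul 2).mul hS
  have hall := hnum.div hden (by
    simp only [Pi.mul_apply]
    positivity)
  refine ⟨_, ?_, hall⟩
  simp only [Pi.mul_apply, Pi.add_apply, id]
  apply div_nonneg _ (sq_nonneg _)
  generalize √((1 - x ^ 2) * (X - c ^ 2 * x ^ 2)) = S at *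
  generalize hP : 1 - x ^ 2 = p at *
  generalize hQ : X - c ^ 2 * x ^ 2 = q at *
  generalize hD : c ^ 2 = d at *
  have hd0 : 0 ≤ d := by rw [← hD]; positivity
  have key : (1 * (q + d * p) + x * (-(d * (2 * x)) + d * -(2 * x))) * (2 * q * S) -
      x * (q + d * p) * (2 * -(d * (2 * x)) * S + 2 * q * -(x * (q + d * p) / S)) =
      2 * (q / S) * ((q + d * p - 4 * d * x ^ 2) * S ^ 2 + 2 * d * x ^ 2 * (q + d * p) * S ^ 2 / q
        + x ^ 2 * (q + d * p) ^ 2) := by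
    field_simp
    ring
  rw [key]
  apply mul_nonneg (by positivity)
  rw [hSS]
  have : 2 * d * x ^ 2 * (q + d * p) * (p * q) / q = 2 * d * x ^ 2 * (q + d * p) * p := by
    field_simp
  rw [this]
  have e : (q + d * p - 4 * d * x ^ 2) * (p * q) + 2 * d * x ^ 2 * (q + d * p) * p + x ^ 2 * (q + d * p) ^ 2
    = (q + d * p) * (p * q) + 2 * d * d * x ^ 2 * p * p + x ^ 2 * (q * q + (d * p) ^ 2) := by ring
  rw [e]
  positivity

theorem Sol.right_half {c X χ : ℝ} {ψ w : ℝ → ℝ} (hX : c ^ 2 < X) (hχ : χ ≤ X) (h : Sol c χ ψ w)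
    {z b : ℝ} (hz : -1 < z) (hzb : z < b) (hb : b ≤ 1) (hψ : ψ z = 0)
    (hw : ∀ x ∈ Set.Ico z b, 0 < w x) (hwb : w b = 0) :
    π / 2 + Real.arctan (KK c X z) ≤ phase c X b - phase c X z := by
  obtain ⟨h1, h2, h3, h4, h5, h6⟩ := h
  have hin : ∀ x ∈ Set.Ico z b, x ∈ Set.Ioo (-1:ℝ) 1 := fun x hx =>
    ⟨lt_of_lt_of_le hz hx.1, lt_of_lt_of_le hx.2 hb⟩
  have hsub : Set.Icc z b ⊆ Set.Icc (-1) 1 := Set.Icc_subset_Icc hz.le hb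
  have hmono : StrictMonoOn ψ (Set.Icc z b) := by
    apply strictMonoOn_of_deriv_pos (convex_Icc z b) (h1.mono hsub)
    intro x hx
    rw [interior_Icc] at hx
    have hx' := hin x ⟨hx.1.le, hx.2⟩
    rw [(h3 x hx').deriv]
    have hp : 0 < 1 - x ^ 2 := by nlinarith [hx'.1, hx'.2]
    exact div_pos (hw x ⟨hx.1.le, hx.2⟩) hp
  have hψb : 0 < ψ b := by
    rw [← hψ]; exact hmono ⟨le_refl z, hzb.le⟩ ⟨hzb.le, le_refl b⟩ hzb
  have hψpos : ∀ x ∈ Set.Ioo z b, 0 < ψ x := by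
    intro x hx
    rw [← hψ]; exact hmono ⟨le_refl z, hzb.le⟩ ⟨hx.1.le, hx.2.le⟩ hx.1
  set S : ℝ → ℝ := fun x => √((1 - x ^ 2) * (X - c ^ 2 * x ^ 2)) with hSdef
  set m : ℝ → ℝ := fun x => KK c X x - S x * (ψ x / w x) with hm
  have hder : ∀ x ∈ Set.Ico z b, ∃ d, 0 ≤ d ∧ HasDerivAt (fun x => Real.arctan (m x) + phase c X x) d x := by
    intro x hx
    have hx' := hin x hx
    have hp : 0 < 1 - x ^ 2 := by nlinarith [hx'.1, hx'.2]
    have hq : 0 < X - c ^ 2 * x ^ 2 := by nlinarith [sq_nonneg c]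
    have hwx := hw x hx
    obtain ⟨k, hk, hkd⟩ := KK_deriv hX hx'
    have hS := S_deriv hX hx'
    have hy := (h3 x hx').div (h4 x hx') hwx.ne'
    have hmd := hkd.sub (hS.mul hy)
    have hall := hmd.arctan.add (phase_deriv c X hx')
    refine ⟨_, ?_, hall⟩
    simp only [Pi.sub_apply, Pi.mul_apply, Pi.div_apply]
    have hSp : 0 < √((1 - x ^ 2) * (X - c ^ 2 * x ^ 2)) := Real.sqrt_pos.mpr (mul_pos hp hq)
    have hSS : √((1 - x ^ 2) * (X - c ^ 2 * x ^ 2)) ^ 2 = (1 - x ^ 2) * (X - c ^ 2 * x ^ 2) :=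
      Real.sq_sqrt (mul_pos hp hq).le
    have hKK : KK c X x = x * ((X - c ^ 2 * x ^ 2) + c ^ 2 * (1 - x ^ 2)) /
      (2 * (X - c ^ 2 * x ^ 2) * √((1 - x ^ 2) * (X - c ^ 2 * x ^ 2))) := rfl
    generalize KK c X x = K0 at *
    generalize √((1 - x ^ 2) * (X - c ^ 2 * x ^ 2)) = T at *
    have hqq : χ - c ^ 2 * x ^ 2 = (X - c ^ 2 * x ^ 2) - (X - χ) := by ring
    rw [hqq]
    have he : 0 ≤ X - χ := by linarith
    generalize X - χ = ε at *
    generalize hP : 1 - x ^ 2 = p at *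
    generalize hQ : X - c ^ 2 * x ^ 2 = q at *
    generalize hD : c ^ 2 = d at *
    generalize w x = W at *
    generalize ψ x = Y at *
    have hM : 0 < 1 + (K0 - T * (Y / W)) ^ 2 := by positivity
    rw [one_div, ← div_eq_inv_mul, div_add' _ _ _ hM.ne']
    apply div_nonneg _ hM.le
    have key : k - (-(x * (q + d * p) / T) * (Y / W) + T * ((W / p * W - Y * -((q - ε) * Y)) / W ^ 2))
        + T / p * (1 + (K0 - T * (Y / W)) ^ 2) = k + T / p * K0 ^ 2 + T * ε * (Y / W) ^ 2 := by
      have t1 : T * ((W / p * W - Y * -((q - ε) * Y)) / W ^ 2) = T / p + T * q * (Y / W) ^ 2 - T * ε * (Y / W) ^ 2 := by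
        field_simp
        ring
      have t2 : T / p * (2 * K0 * T) = x * (q + d * p) / T := by
        rw [hKK]
        field_simp
        linear_combination x * (q + d * p) * hSS
      have t3 : T / p * T ^ 2 = T * q := by
        rw [hSS]; field_simp
      rw [t1]
      linear_combination (-(Y / W)) * t2 + (Y / W) ^ 2 * t3
    rw [key]
    positivity
  have hJ : MonotoneOn (fun x => Real.arctan (m x) + phase c X x) (Set.Ico z b) := by
    apply monotoneOn_of_deriv_nonneg (convex_Ico z b)
    · intro x hx
      obtain ⟨d, hd, hdd⟩ := hder x hx
      exact hdd.continuousAt.continuousWithinAt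
    · intro x hx
      rw [interior_Ico] at hx
      obtain ⟨d, hd, hdd⟩ := hder x ⟨hx.1.le, hx.2⟩
      exact hdd.differentiableAt.differentiableWithinAt
    · intro x hx
      rw [interior_Ico] at hx
      obtain ⟨d, hd, hdd⟩ := hder x ⟨hx.1.le, hx.2⟩
      rw [hdd.deriv]; exact hd
  have hevz : ∀ᶠ x in nhdsWithin b (Set.Iio b), x ∈ Set.Ioo z b := Ioo_mem_nhdsLT hzb
  have hle : nhdsWithin b (Set.Iio b) ≤ nhdsWithin b (Set.Icc (-1) 1) := by
    apply nhdsWithin_le_of_mem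
    filter_upwards [hevz] with x hx
    exact ⟨by linarith [hx.1], by linarith [hx.2]⟩
  have hbmem : b ∈ Set.Icc (-1:ℝ) 1 := ⟨by linarith, hb⟩
  have hψlim : Filter.Tendsto ψ (nhdsWithin b (Set.Iio b)) (nhds (ψ b)) := (h1 b hbmem).mono_left hle
  have hwlim : Filter.Tendsto w (nhdsWithin b (Set.Iio b)) (nhds 0) := by
    have := (h2 b hbmem).mono_left hle
    rwa [hwb] at this
  have hScont : Continuous S := by
    rw [hSdef]; fun_prop
  have hmlim : Filter.Tendsto m (nhdsWithin b (Set.Iio b)) Filter.atBot := by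
    rcases lt_or_eq_of_le hb with hb1 | hb1
    · skip
      have hb' : b ∈ Set.Ioo (-1:ℝ) 1 := ⟨by linarith, hb1⟩
      obtain ⟨k, _, hkd⟩ := KK_deriv hX hb'
      have hKlim : Filter.Tendsto (KK c X) (nhdsWithin b (Set.Iio b)) (nhds (KK c X b)) :=
        hkd.continuousAt.tendsto.mono_left nhdsWithin_le_nhds
      have hwinv : Filter.Tendsto (fun x => (w x)⁻¹) (nhdsWithin b (Set.Iio b)) Filter.atTop := by
        apply tendsto_inv_nhdsGT_zero.comp
        rw [tendsto_nhdsWithin_iff]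
        refine ⟨hwlim, ?_⟩
        filter_upwards [hevz] with x hx
        exact hw x ⟨hx.1.le, hx.2⟩
      have hp : 0 < 1 - b ^ 2 := by nlinarith [hb'.1, hb'.2]
      have hq : 0 < X - c ^ 2 * b ^ 2 := by nlinarith [sq_nonneg c]
      have hSb : 0 < S b := Real.sqrt_pos.mpr (mul_pos hp hq)
      have hnum : Filter.Tendsto (fun x => S x * ψ x) (nhdsWithin b (Set.Iio b)) (nhds (S b * ψ b)) :=
        ((hScont.tendsto b).mono_left nhdsWithin_le_nhds).mul hψlim
      have hbig := Filter.Tendsto.pos_mul_atTop (mul_pos hSb hψb) hnum hwinv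
      have := Filter.Tendsto.add_atBot hKlim (Filter.tendsto_neg_atTop_atBot.comp hbig)
      refine this.congr ?_
      intro x
      simp only [hm, Function.comp]
      rw [div_eq_mul_inv]; ring
    · skip
      subst hb1
      have ev1 : ∀ᶠ x in nhdsWithin (1:ℝ) (Set.Iio 1), ψ 1 < (1 + x) * ψ x := by
        have t1 : Filter.Tendsto (fun x : ℝ => (1 + x)) (nhdsWithin (1:ℝ) (Set.Iio 1)) (nhds (1 + 1)) :=
          ((continuous_const.add continuous_id).tendsto 1).mono_left nhdsWithin_le_nhds
        exact (t1.mul hψlim).eventually (lt_mem_nhds (by linarith))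
      have hX0 : 0 < X := lt_of_le_of_lt (sq_nonneg c) hX
      have ev2 : ∀ᶠ x in nhdsWithin (1:ℝ) (Set.Iio 1),
          x * ((X - c ^ 2 * x ^ 2) + c ^ 2 * (1 - x ^ 2)) / (2 * (X - c ^ 2 * x ^ 2)) < 3 / 4 := by
        have hcn : ContinuousAt (fun x : ℝ => x * ((X - c ^ 2 * x ^ 2) + c ^ 2 * (1 - x ^ 2)) / (2 * (X - c ^ 2 * x ^ 2))) 1 := by
          apply ContinuousAt.div (by fun_prop) (by fun_prop)
          nlinarith
        have t := hcn.tendsto.mono_left (nhdsWithin_le_nhds (s := Set.Iio 1))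
        refine t.eventually (gt_mem_nhds ?_)
        have : X - c ^ 2 ≠ 0 := by linarith
        have e : (1:ℝ) * ((X - c ^ 2 * 1 ^ 2) + c ^ 2 * (1 - 1 ^ 2)) / (2 * (X - c ^ 2 * 1 ^ 2)) = 1 / 2 := by
          norm_num
          field_simp
        rw [e]; norm_num
      have ev3 : ∀ᶠ x in nhdsWithin (1:ℝ) (Set.Iio 1), x ∈ Set.Ioo 0 1 := Ioo_mem_nhdsLT one_pos
      have hSinv : Filter.Tendsto (fun x => (S x)⁻¹ * (-1/4)) (nhdsWithin 1 (Set.Iio 1)) Filter.atBot := by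
        apply Filter.Tendsto.atTop_mul_const_of_neg (by norm_num)
        apply tendsto_inv_nhdsGT_zero.comp
        rw [tendsto_nhdsWithin_iff]
        constructor
        · have : S 1 = 0 := by simp [hSdef]
          rw [← this]
          exact (hScont.tendsto 1).mono_left nhdsWithin_le_nhds
        · filter_upwards [ev3] with x hx
          have hp : 0 < 1 - x ^ 2 := by nlinarith [hx.1, hx.2]
          have hq : 0 < X - c ^ 2 * x ^ 2 := by nlinarith [sq_nonneg c]
          exact Real.sqrt_pos.mpr (mul_pos hp hq)
      refine Filter.tendsto_atBot_mono' _ ?_ hSinv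
      filter_upwards [ev1, ev2, ev3, hevz] with x hx1 hx2 hx3 hx4
      have hp : 0 < 1 - x ^ 2 := by nlinarith [hx3.1, hx3.2]
      have hq : 0 < X - c ^ 2 * x ^ 2 := by nlinarith [sq_nonneg c]
      have hwx := hw x ⟨hx4.1.le, hx4.2⟩
      have hwle : w x ≤ (1 - x ^ 2) * (X - c ^ 2 * x ^ 2) * ψ x := by
        obtain ⟨ξ, hξ, hsl⟩ := exists_hasDerivAt_eq_slope w (fun x => -((χ - c ^ 2 * x ^ 2) * ψ x)) hx3.2
          (h2.mono (Set.Icc_subset_Icc (by linarith [hx3.1]) le_rfl))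
          (fun y hy => h4 y ⟨by linarith [hy.1, hx3.1], hy.2⟩)
        have h1x : 0 < 1 - x := by linarith [hx3.2]
        simp only [hwb] at hsl
        rw [eq_div_iff h1x.ne'] at hsl
        have hψξ : 0 < ψ ξ := hψpos ξ ⟨by linarith [hx4.1, hξ.1], hξ.2⟩
        have hψξ1 : ψ ξ ≤ ψ 1 := hmono.monotoneOn ⟨by linarith [hx4.1, hξ.1], hξ.2.le⟩ ⟨hzb.le, le_rfl⟩ hξ.2.le
        have a1 : χ - c ^ 2 * ξ ^ 2 ≤ X - c ^ 2 * x ^ 2 := by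
          have : x ^ 2 ≤ ξ ^ 2 := by nlinarith [hξ.1, hx3.1]
          nlinarith [sq_nonneg c]
        have a2 : (χ - c ^ 2 * ξ ^ 2) * ψ ξ ≤ (X - c ^ 2 * x ^ 2) * ((1 + x) * ψ x) := by
          calc (χ - c ^ 2 * ξ ^ 2) * ψ ξ ≤ (X - c ^ 2 * x ^ 2) * ψ ξ := by gcongr
            _ ≤ (X - c ^ 2 * x ^ 2) * ((1 + x) * ψ x) := by gcongr; linarith
        have a3 := mul_le_mul_of_nonneg_right a2 h1x.le
        nlinarith
      have hSp : 0 < √((1 - x ^ 2) * (X - c ^ 2 * x ^ 2)) := Real.sqrt_pos.mpr (mul_pos hp hq)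
      have hSS : √((1 - x ^ 2) * (X - c ^ 2 * x ^ 2)) ^ 2 = (1 - x ^ 2) * (X - c ^ 2 * x ^ 2) :=
        Real.sq_sqrt (mul_pos hp hq).le
      have h7 : 1 ≤ (1 - x ^ 2) * (X - c ^ 2 * x ^ 2) * (ψ x / w x) := by
        rw [← mul_div_assoc, le_div_iff₀ hwx]; linarith
      simp only [hm, hSdef]
      have e1 : KK c X x = (√((1 - x ^ 2) * (X - c ^ 2 * x ^ 2)))⁻¹ *
        (x * ((X - c ^ 2 * x ^ 2) + c ^ 2 * (1 - x ^ 2)) / (2 * (X - c ^ 2 * x ^ 2))) := by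
        unfold KK
        field_simp
      have e2 : √((1 - x ^ 2) * (X - c ^ 2 * x ^ 2)) * (ψ x / w x) =
        (√((1 - x ^ 2) * (X - c ^ 2 * x ^ 2)))⁻¹ * ((1 - x ^ 2) * (X - c ^ 2 * x ^ 2) * (ψ x / w x)) := by
        rw [← hSS, Real.sqrt_sq hSp.le]
        field_simp
      rw [e1, e2, ← mul_sub]
      apply mul_le_mul_of_nonneg_left _ (inv_pos.mpr hSp).le
      linarith
  have hJlim : Filter.Tendsto (fun x => Real.arctan (m x) + phase c X x) (nhdsWithin b (Set.Iio b))
      (nhds (-(π / 2) + phase c X b)) := by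
    apply Filter.Tendsto.add
    · exact (Real.tendsto_arctan_atBot.mono_right nhdsWithin_le_nhds).comp hmlim
    · exact ((phase_continuous c X).tendsto b).mono_left nhdsWithin_le_nhds
  have hfinal := ge_of_tendsto (b := Real.arctan (m z) + phase c X z) hJlim (by
    filter_upwards [hevz] with x hx
    exact hJ ⟨le_refl z, hzb⟩ ⟨hx.1.le, hx.2⟩ hx.1.le)
  have hmz : m z = KK c X z := by simp [hm, hψ]
  rw [hmz] at hfinal
  linarith

theorem Sol.gap_pos {c X χ : ℝ} {ψ w : ℝ → ℝ} (hX : c ^ 2 < X) (hχ : χ ≤ X) (h : Sol c χ ψ w)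
    {z : ℝ} (hz : z ∈ Set.Ioo (-1:ℝ) 1) (hψ : ψ z = 0) (hw : 0 < w z) :
    ∃ a b, -1 ≤ a ∧ a < z ∧ z < b ∧ b ≤ 1 ∧ (∀ x ∈ Set.Ioo a b, w x ≠ 0) ∧
      π ≤ phase c X b - phase c X a := by
  have half : ∀ (ψ w : ℝ → ℝ), Sol c χ ψ w → ∀ z ∈ Set.Ioo (-1:ℝ) 1, ψ z = 0 → 0 < w z →
      ∃ b, z < b ∧ b ≤ 1 ∧ (∀ x ∈ Set.Ico z b, w x ≠ 0) ∧
      π / 2 + Real.arctan (KK c X z) ≤ phase c X b - phase c X z := by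
    intro ψ w h z hz hψ hw
    have hcw : ContinuousOn w (Set.Icc z 1) := h.2.1.mono (Set.Icc_subset_Icc hz.1.le le_rfl)
    have hcl : IsCompact (Set.Icc z 1 ∩ w ⁻¹' {0}) :=
      isCompact_Icc.of_isClosed_subset (hcw.preimage_isClosed_of_isClosed isClosed_Icc isClosed_singleton) Set.inter_subset_left
    obtain ⟨b, hb, hleast⟩ := hcl.exists_isLeast ⟨1, ⟨hz.2.le, le_rfl⟩, h.2.2.2.2.1⟩
    have hwb : w b = 0 := hb.2
    have hzb : z < b := lt_of_le_of_ne hb.1.1 (by rintro rfl; linarith)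
    have hne : ∀ x ∈ Set.Ico z b, w x ≠ 0 := by
      intro x hx hx0
      have := hleast ⟨⟨hx.1, hx.2.le.trans hb.1.2⟩, hx0⟩
      linarith [hx.2]
    refine ⟨b, hzb, hb.1.2, hne, ?_⟩
    refine Sol.right_half hX hχ h hz.1 hzb hb.1.2 hψ ?_ hwb
    intro x hx
    by_contra hcon
    push Not at hcon
    obtain ⟨y, hy, hy0⟩ := intermediate_value_Icc' hx.1 (hcw.mono (Set.Icc_subset_Icc le_rfl (hx.2.le.trans hb.1.2))) ⟨hcon, hw.le⟩
    exact hne y ⟨hy.1, lt_of_le_of_lt hy.2 hx.2⟩ hy0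
  obtain ⟨b, hb1, hb2, hb3, hb4⟩ := half ψ w h z hz hψ hw
  obtain ⟨a, ha1, ha2, ha3, ha4⟩ := half _ _ h.refl (-z) ⟨by linarith [hz.2], by linarith [hz.1]⟩
    (by simp [hψ]) (by simpa using hw)
  refine ⟨-a, b, by linarith, by linarith, hb1, hb2, ?_, ?_⟩
  · intro x hx
    rcases le_or_gt z x with hzx | hzx
    · exact hb3 x ⟨hzx, hx.2⟩
    · have := ha3 (-x) ⟨by linarith, by linarith [hx.1]⟩
      simpa using this
  · rw [KK_neg, Real.arctan_neg, phase_neg] at ha4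
    rw [phase_neg]
    linarith

theorem Sol.gap {c X χ : ℝ} {ψ w : ℝ → ℝ} (hX : c ^ 2 < X) (hχ : χ ≤ X) (h : Sol c χ ψ w)
    {z : ℝ} (hz : z ∈ Set.Ioo (-1:ℝ) 1) (hψ : ψ z = 0) (hw : w z ≠ 0) :
    ∃ a b, -1 ≤ a ∧ a < z ∧ z < b ∧ b ≤ 1 ∧ (∀ x ∈ Set.Ioo a b, w x ≠ 0) ∧
      π ≤ phase c X b - phase c X a := by
  rcases lt_or_gt_of_ne hw with hw | hw
  · obtain ⟨a, b, h1, h2, h3, h4, h5, h6⟩ := h.neg.gap_pos hX hχ hz (by simp [hψ]) (by simpa using hw)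
    exact ⟨a, b, h1, h2, h3, h4, fun x hx => by simpa using h5 x hx, h6⟩
  · exact h.gap_pos hX hχ hz hψ hw

theorem Sol.count {c X χ : ℝ} {ψ w : ℝ → ℝ} (hX : c ^ 2 < X) (hχ : χ ≤ X) (h : Sol c χ ψ w)
    (hfin : {x | x ∈ Set.Ioo (-1 : ℝ) 1 ∧ ψ x = 0}.Finite) :
    ({x | x ∈ Set.Ioo (-1 : ℝ) 1 ∧ ψ x = 0}.ncard : ℝ) * π ≤ phase c X 1 - phase c X (-1) := by
  have hg : ∀ z, z ∈ {x | x ∈ Set.Ioo (-1 : ℝ) 1 ∧ ψ x = 0} →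
    ∃ a b, -1 ≤ a ∧ a < z ∧ z < b ∧ b ≤ 1 ∧ (∀ x ∈ Set.Ioo a b, w x ≠ 0) ∧
      π ≤ phase c X b - phase c X a := fun z hz =>
    h.gap hX hχ hz.1 hz.2 (h.ne_zero hfin hz.1 hz.2)
  choose! A B hA1 hA hB hB1 hne hpi using hg
  have key : ∀ T : Finset ℝ, (∀ t ∈ T, t ∈ {x | x ∈ Set.Ioo (-1 : ℝ) 1 ∧ ψ x = 0}) → ∀ y, -1 ≤ y → (∀ t ∈ T, B t ≤ y) →
      (T.card : ℝ) * π ≤ phase c X y - phase c X (-1) := by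
    intro T
    induction T using Finset.induction_on_max with
    | empty =>
      intro _ y hy _
      simp
      exact phase_mono c X hy
    | insert a s hs ih =>
      intro hT y hy hBy
      have ha := hT a (Finset.mem_insert_self a s)
      have hsub : ∀ t ∈ s, t ∈ {x | x ∈ Set.Ioo (-1 : ℝ) 1 ∧ ψ x = 0} := fun t ht =>
        hT t (Finset.mem_insert_of_mem ht)
      have := ih hsub (A a) (hA1 a ha) (by
        intro t ht
        have htZ := hsub t ht
        have hta := hs t ht
        obtain ⟨e, he, hee⟩ := exists_hasDerivAt_eq_zero hta
          (h.1.mono (Set.Icc_subset_Icc htZ.1.1.le ha.1.2.le)) (by rw [htZ.2, ha.2])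
          (fun x hx => h.2.2.1 x ⟨by linarith [htZ.1.1, hx.1], by linarith [ha.1.2, hx.2]⟩)
        have hp : 0 < 1 - e ^ 2 := by nlinarith [htZ.1.1, he.1, ha.1.2, he.2]
        have hwe : w e = 0 := by
          rcases div_eq_zero_iff.mp hee with h0 | h0
          · exact h0
          · linarith
        have u1 : B t ≤ e := by
          by_contra hcon
          push Not at hcon
          exact hne t htZ e ⟨by linarith [hA t htZ, he.1], hcon⟩ hwe
        have u2 : e ≤ A a := by
          by_contra hcon
          push Not at hcon
          exact hne a ha e ⟨hcon, by linarith [hB a ha, he.2]⟩ hwe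
        linarith)
      have hnot : a ∉ s := fun hmem => lt_irrefl _ (hs a hmem)
      rw [Finset.card_insert_of_notMem hnot]
      push_cast
      have h8 := hpi a ha
      have h9 := phase_mono c X (hBy a (Finset.mem_insert_self a s))
      linarith
  have := key hfin.toFinset (fun t ht => hfin.mem_toFinset.mp ht) 1 (by norm_num)
    (fun t ht => hB1 t (hfin.mem_toFinset.mp ht))
  rwa [← Set.ncard_eq_toFinset_card _ hfin] at this

theorem exp_div_le {k j : ℕ} (hj : j ≠ 0) {E : ℝ} (hE : 0 ≤ E) (h : (2.7182818286:ℝ) ^ k ≤ E ^ j) :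
    Real.exp ((k:ℝ) / j) ≤ E := by
  have h1 : Real.exp ((k:ℝ) / j) ^ j ≤ E ^ j := by
    rw [← Real.exp_nat_mul]
    have : (j:ℝ) * ((k:ℝ) / j) = (k:ℝ) * 1 := by
      field_simp
    rw [this, Real.exp_nat_mul]
    refine le_trans ?_ h
    exact pow_le_pow_left₀ (Real.exp_pos 1).le Real.exp_one_lt_d9.le k
  exact le_of_pow_le_pow_left₀ hj hE h1

theorem ell_piece {s l r m ρ E : ℝ} (hs0 : 0 < s) (hm : 0 < m) (_hl : l ≤ s) (_hr : s ≤ r)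
    (hE : Real.exp ρ ≤ E)
    (hpos : 0 ≤ 1 - (3 - 2 * (s + 1 / 2) / m ^ 2) / (64 * (m ^ 2) ^ 2))
    (hfin : 1.5708 * ((((s + 1 / 2) / m + m) / 2) * (1 - (3 - 2 * (s + 1 / 2) / m ^ 2) / (64 * (m ^ 2) ^ 2)))
      ≤ 1 + s / 4 + s / 4 * (ρ + 1 - s * E / 16)) :
    π / 2 * (√(s + 1 / 2) * (1 - 1 / (64 * (s + 1 / 2) ^ 2))) ≤ 1 + s / 4 + s / 4 * Real.log (16 / s) := by
  have hw : 0 < s + 1 / 2 := by linarith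
  have h1 : ρ + 1 - s * E / 16 ≤ Real.log (16 / s) := by
    have h2 := Real.log_le_sub_one_of_pos (x := s * Real.exp ρ / 16) (by positivity)
    have h3 : Real.log (s * Real.exp ρ / 16) = ρ - Real.log (16 / s) := by
      rw [Real.log_div (by positivity) (by norm_num), Real.log_mul hs0.ne' (Real.exp_pos _).ne',
        Real.log_exp, Real.log_div (by norm_num) hs0.ne']
      ring
    rw [h3] at h2
    have : s * Real.exp ρ ≤ s * E := by gcongr
    linarith
  have h4 : √(s + 1 / 2) ≤ ((s + 1 / 2) / m + m) / 2 := by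
    have : √(s + 1 / 2) ^ 2 = s + 1 / 2 := Real.sq_sqrt hw.le
    have e : ((s + 1 / 2) / m + m) / 2 - √(s + 1 / 2) = (√(s + 1 / 2) - m) ^ 2 / (2 * m) := by
      rw [← this]
      rw [Real.sqrt_sq (Real.sqrt_nonneg _)]
      field_simp
      ring
    have : 0 ≤ (√(s + 1 / 2) - m) ^ 2 / (2 * m) := by positivity
    linarith
  have h5 : 1 - 1 / (64 * (s + 1 / 2) ^ 2) ≤ 1 - (3 - 2 * (s + 1 / 2) / m ^ 2) / (64 * (m ^ 2) ^ 2) := by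
    generalize s + 1 / 2 = w at *
    have e : 1 / (64 * w ^ 2) - (3 - 2 * w / m ^ 2) / (64 * (m ^ 2) ^ 2) =
      (m ^ 2 - w) ^ 2 * (m ^ 2 + 2 * w) / (64 * w ^ 2 * (m ^ 2) ^ 3) := by
      field_simp
      ring
    have : 0 ≤ (m ^ 2 - w) ^ 2 * (m ^ 2 + 2 * w) / (64 * w ^ 2 * (m ^ 2) ^ 3) := by positivity
    linarith
  have h6 : √(s + 1 / 2) * (1 - 1 / (64 * (s + 1 / 2) ^ 2)) ≤
      (((s + 1 / 2) / m + m) / 2) * (1 - (3 - 2 * (s + 1 / 2) / m ^ 2) / (64 * (m ^ 2) ^ 2)) :=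
    (mul_le_mul_of_nonneg_left h5 (Real.sqrt_nonneg _)).trans (mul_le_mul_of_nonneg_right h4 hpos)
  have h7 : 0 ≤ (((s + 1 / 2) / m + m) / 2) * (1 - (3 - 2 * (s + 1 / 2) / m ^ 2) / (64 * (m ^ 2) ^ 2)) :=
    mul_nonneg (by positivity) hpos
  have hpi : π / 2 ≤ 1.5708 := by linarith [Real.pi_lt_d4]
  calc _ ≤ π / 2 * ((((s + 1 / 2) / m + m) / 2) * (1 - (3 - 2 * (s + 1 / 2) / m ^ 2) / (64 * (m ^ 2) ^ 2))) := by
        gcongr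
    _ ≤ 1.5708 * ((((s + 1 / 2) / m + m) / 2) * (1 - (3 - 2 * (s + 1 / 2) / m ^ 2) / (64 * (m ^ 2) ^ 2))) := by
        gcongr
    _ ≤ _ := hfin
    _ ≤ _ := by gcongr

theorem ell_large_num {s : ℝ} (h1 : 1 / 3 ≤ s) (h2 : s ≤ 5) :
    π / 2 * (√(s + 1 / 2) * (1 - 1 / (64 * (s + 1 / 2) ^ 2))) ≤ 1 + s / 4 + s / 4 * Real.log (16 / s) := by
  have hs0 : 0 < s := by linarith
  rcases le_total s 0.5 with h | h
  · refine ell_piece (l := 1 / 3) (r := 0.5) (m := 0.94) hs0 (by norm_num) h1 h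
      (exp_div_le (k := 37) (j := 10) (E := 40.448) (by norm_num) (by norm_num) (by norm_num)) ?_ ?_
    · norm_num; linarith
    · norm_num; nlinarith [mul_nonneg (sub_nonneg.mpr h1) (sub_nonneg.mpr h)]
  rcases le_total s 0.75 with h' | h'
  · refine ell_piece (l := 0.5) (r := 0.75) (m := 1.03) hs0 (by norm_num) h h'
      (exp_div_le (k := 33) (j := 10) (E := 27.113) (by norm_num) (by norm_num) (by norm_num)) ?_ ?_
    · norm_num; linarith
    · norm_num; nlinarith [mul_nonneg (sub_nonneg.mpr h) (sub_nonneg.mpr h')]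
  clear h
  rcases le_total s 1.25 with h | h
  · refine ell_piece (l := 0.75) (r := 1.25) (m := 1.18) hs0 (by norm_num) h' h
      (exp_div_le (k := 28) (j := 10) (E := 16.445) (by norm_num) (by norm_num) (by norm_num)) ?_ ?_
    · norm_num; linarith
    · norm_num; nlinarith [mul_nonneg (sub_nonneg.mpr h') (sub_nonneg.mpr h)]
  clear h'
  rcases le_total s 2.2 with h' | h'
  · refine ell_piece (l := 1.25) (r := 2.2) (m := 1.42) hs0 (by norm_num) h h'
      (exp_div_le (k := 22) (j := 10) (E := 9.026) (by norm_num) (by norm_num) (by norm_num)) ?_ ?_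
    · norm_num; linarith
    · norm_num; nlinarith [mul_nonneg (sub_nonneg.mpr h) (sub_nonneg.mpr h')]
  clear h
  rcases le_total s 3.6 with h | h
  · refine ell_piece (l := 2.2) (r := 3.6) (m := 1.84) hs0 (by norm_num) h' h
      (exp_div_le (k := 17) (j := 10) (E := 5.474) (by norm_num) (by norm_num) (by norm_num)) ?_ ?_
    · norm_num; linarith
    · norm_num; nlinarith [mul_nonneg (sub_nonneg.mpr h') (sub_nonneg.mpr h)]
  · refine ell_piece (l := 3.6) (r := 5) (m := 2.22) hs0 (by norm_num) h h2
      (exp_div_le (k := 12) (j := 10) (E := 3.321) (by norm_num) (by norm_num) (by norm_num)) ?_ ?_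
    · norm_num; linarith
    · norm_num; nlinarith [mul_nonneg (sub_nonneg.mpr h) (sub_nonneg.mpr h2)]

theorem sqrt_cubic {z : ℝ} (h1 : -1 ≤ z) (h2 : z ≤ 1) :
    √(1 + z) ≤ 1 + z / 2 - z ^ 2 / 8 + z ^ 3 / 16 := by
  rw [Real.sqrt_le_iff]
  constructor
  · have : 0 ≤ (1 + z) * (1 - z) := mul_nonneg (by linarith) (by linarith)
    nlinarith [sq_nonneg z, mul_nonneg (sq_nonneg z) (by linarith : 0 ≤ 1 + z)]
  · have e : (1 + z / 2 - z ^ 2 / 8 + z ^ 3 / 16) ^ 2 - (1 + z) = z ^ 4 * ((z - 2) ^ 2 + 16) / 256 := by ring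
    have : 0 ≤ z ^ 4 * ((z - 2) ^ 2 + 16) / 256 := by positivity
    linarith

theorem ell_large_int {s : ℝ} (hs : 0 < s) :
    ∫ u in (0:ℝ)..(π / 2), √(s + Real.sin u ^ 2) ≤ π / 2 * (√(s + 1 / 2) * (1 - 1 / (64 * (s + 1 / 2) ^ 2))) := by
  set w := s + 1 / 2 with hw
  have hw0 : 1 / 2 < w := by rw [hw]; linarith
  have hw1 : 0 < w := by linarith
  set f : ℝ → ℝ := fun u => √w * (u - Real.sin (2 * u) / (8 * w) -
    (u / 2 + Real.sin (2 * u) * Real.cos (2 * u) / 4) / (32 * w ^ 2) -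
    (Real.sin (2 * u) / 2 - Real.sin (2 * u) ^ 3 / 6) / (128 * w ^ 3)) with hf
  set f' : ℝ → ℝ := fun u => √w * (1 + (-Real.cos (2 * u) / (2 * w)) / 2 - (-Real.cos (2 * u) / (2 * w)) ^ 2 / 8
    + (-Real.cos (2 * u) / (2 * w)) ^ 3 / 16) with hf'
  have hder : ∀ u, HasDerivAt f (f' u) u := by
    intro u
    have h2 : HasDerivAt (fun u : ℝ => 2 * u) 2 u := ((hasDerivAt_id u).const_mul 2).congr_deriv (by simp)
    have hs2 := h2.sin
    have hc2 := h2.cos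
    have := (((((hasDerivAt_id u).sub (hs2.div_const (8 * w))).sub
      ((((hasDerivAt_id u).div_const 2).add ((hs2.mul hc2).div_const 4)).div_const (32 * w ^ 2))).sub
      (((hs2.div_const 2).sub ((hs2.pow 3).div_const 6)).div_const (128 * w ^ 3)))).const_mul (√w)
    refine this.congr_deriv ?_
    simp only [hf']
    congr 1
    have h3 : Real.sin (2 * u) ^ 2 = 1 - Real.cos (2 * u) ^ 2 := Real.sin_sq _
    generalize Real.sin (2 * u) = S at *
    generalize Real.cos (2 * u) = C at *
    norm_num
    field_simp
    linear_combination (786432 + 1572864 * s + 786432 * C) * h3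
  have hcont : Continuous f' := by
    rw [hf']; fun_prop
  have hint : ∫ u in (0:ℝ)..(π / 2), f' u = f (π / 2) - f 0 :=
    intervalIntegral.integral_eq_sub_of_hasDerivAt (fun u _ => hder u) (hcont.intervalIntegrable _ _)
  have hval : f (π / 2) - f 0 = π / 2 * (√w * (1 - 1 / (64 * w ^ 2))) := by
    have : 2 * (π / 2) = π := by ring
    simp only [hf, this, Real.sin_pi, Real.cos_pi, mul_zero, Real.sin_zero]
    field_simp
    ring
  rw [← hval, ← hint]
  apply intervalIntegral.integral_mono_on (by positivity)
  · have : Continuous (fun u => √(s + Real.sin u ^ 2)) := by fun_prop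
    exact this.intervalIntegrable _ _
  · exact hcont.intervalIntegrable _ _
  · intro u _
    have e : s + Real.sin u ^ 2 = w * (1 + (-Real.cos (2 * u) / (2 * w))) := by
      rw [Real.sin_sq_eq_half_sub]
      field_simp
      rw [hw]; ring
    rw [e, Real.sqrt_mul hw1.le]
    simp only [hf']
    apply mul_le_mul_of_nonneg_left _ (Real.sqrt_nonneg _)
    apply sqrt_cubic
    · rw [le_div_iff₀ (by linarith)]
      linarith [Real.cos_le_one (2 * u)]
    · rw [div_le_iff₀ (by linarith)]
      linarith [Real.neg_one_le_cos (2 * u)]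

theorem ell_poly {r s : ℝ} (h : s = r ^ 2 - 1) :
    r / 2 + (2 + s) * r / 16 + s / 2 * ((r - 1) / 2) - s ^ 2 / 16 * (5 / 4) + 3 / 8 - s / 8 ≤ 1 + s / 4 := by
  subst h
  have e : 1 + (r ^ 2 - 1) / 4 - (r / 2 + (2 + (r ^ 2 - 1)) * r / 16 + (r ^ 2 - 1) / 2 * ((r - 1) / 2)
    - (r ^ 2 - 1) ^ 2 / 16 * (5 / 4) + 3 / 8 - (r ^ 2 - 1) / 8) = 5 / 64 * (r - 1) ^ 4 := by ring
  have : 0 ≤ 5 / 64 * (r - 1) ^ 4 := by positivity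
  linarith

set_option maxHeartbeats 1000000 in
theorem ell_small {s : ℝ} (hs : 0 < s) (hs3 : s ≤ 1 / 3) :
    ∫ u in (0:ℝ)..(π / 2), √(s + Real.sin u ^ 2) ≤ 1 + s / 4 + s / 4 * Real.log (16 / s) := by
  set P : ℝ → ℝ := fun u => (1 / 2) * (u * √(s + u ^ 2) + s * Real.log (u + √(s + u ^ 2))) +
    (1 / 16) * (u * (2 * u ^ 2 + s) * √(s + u ^ 2) - s ^ 2 * Real.log (u + √(s + u ^ 2))) with hP
  have hPd : ∀ u, 0 ≤ u → HasDerivAt P ((1 + u ^ 2 / 2) * √(s + u ^ 2)) u := by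
    intro u hu
    have hpos : 0 < s + u ^ 2 := by positivity
    have h1 : HasDerivAt (fun u : ℝ => u ^ 2) (2 * u) u := (hasDerivAt_pow 2 u).congr_deriv (by simp)
    have hq : HasDerivAt (fun u : ℝ => √(s + u ^ 2)) (2 * u / (2 * √(s + u ^ 2))) u :=
      (h1.const_add s).sqrt hpos.ne'
    have hR : 0 < √(s + u ^ 2) := Real.sqrt_pos.mpr hpos
    have hlog := ((hasDerivAt_id u).add hq).log (by simp only [Pi.add_apply, id]; positivity)
    have := ((((hasDerivAt_id u).mul hq).add (hlog.const_mul s)).const_mul (1 / 2)).add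
      (((((hasDerivAt_id u).mul ((h1.const_mul 2).add_const s)).mul hq).sub (hlog.const_mul (s ^ 2))).const_mul (1 / 16))
    refine this.congr_deriv ?_
    simp only [Pi.add_apply, Pi.mul_apply, id]
    have hRR : √(s + u ^ 2) ^ 2 = s + u ^ 2 := Real.sq_sqrt hpos.le
    generalize √(s + u ^ 2) = R at *
    have hsR : s = R ^ 2 - u ^ 2 := by linarith
    have hne : u + R ≠ 0 := by positivity
    rw [hsR]
    field_simp
    ring
  set f : ℝ → ℝ := fun u => P (Real.sin u) + (-Real.cos u - Real.sin u ^ 2 / 2 - Real.sin u ^ 4 / 8)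
    + s / 2 * (-Real.log (1 + Real.cos u) - Real.sin u ^ 2 / 4) with hf
  set f' : ℝ → ℝ := fun u => (1 + Real.sin u ^ 2 / 2) * √(s + Real.sin u ^ 2) * Real.cos u +
    (Real.sin u / (1 + Real.cos u) - Real.cos u * Real.sin u / 2) * (Real.sin u ^ 2 + s / 2) with hf'
  have hpi := Real.pi_pos
  have hcn : ∀ u ∈ Set.Icc 0 (π / 2), 0 ≤ Real.cos u := fun u hu =>
    Real.cos_nonneg_of_mem_Icc ⟨by linarith [hu.1], hu.2⟩
  have hsn : ∀ u ∈ Set.Icc 0 (π / 2), 0 ≤ Real.sin u := fun u hu =>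
    Real.sin_nonneg_of_mem_Icc ⟨hu.1, by linarith [hu.2]⟩
  have huI : Set.uIcc 0 (π / 2) = Set.Icc 0 (π / 2) := Set.uIcc_of_le (by positivity)
  have hder : ∀ u ∈ Set.uIcc 0 (π / 2), HasDerivAt f (f' u) u := by
    intro u hu
    rw [huI] at hu
    have hc := hcn u hu
    have hsd := Real.hasDerivAt_sin u
    have hcd := Real.hasDerivAt_cos u
    have hPs := (hPd (Real.sin u) (hsn u hu)).comp u hsd
    have hl := (hcd.const_add 1).log (by positivity)
    have := (hPs.add (((hcd.neg).sub ((hsd.pow 2).div_const 2)).sub ((hsd.pow 4).div_const 8))).add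
      ((hl.neg.sub ((hsd.pow 2).div_const 4)).const_mul (s / 2))
    refine this.congr_deriv ?_
    simp only [hf']
    have h3 : Real.sin u ^ 2 = 1 - Real.cos u ^ 2 := Real.sin_sq _
    generalize √(s + Real.sin u ^ 2) = R at *
    generalize Real.sin u = S at *
    generalize Real.cos u = C at *
    have : 1 + C ≠ 0 := by positivity
    have h4 : S / (1 + C) * S ^ 2 = S * (1 - C) := by
      rw [h3]; field_simp; ring
    norm_num
    linear_combination (-1) * h4
  have hcont : ContinuousOn f' (Set.uIcc 0 (π / 2)) := by
    rw [huI, hf']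
    apply ContinuousOn.add (by fun_prop)
    apply ContinuousOn.mul _ (by fun_prop)
    apply ContinuousOn.sub _ (by fun_prop)
    apply ContinuousOn.div (by fun_prop) (by fun_prop)
    intro u hu
    have := hcn u hu
    positivity
  have hint : ∫ u in (0:ℝ)..(π / 2), f' u = f (π / 2) - f 0 :=
    intervalIntegral.integral_eq_sub_of_hasDerivAt hder hcont.intervalIntegrable
  have hle : ∫ u in (0:ℝ)..(π / 2), √(s + Real.sin u ^ 2) ≤ f (π / 2) - f 0 := by
    rw [← hint]
    apply intervalIntegral.integral_mono_on (by positivity)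
    · have : Continuous (fun u => √(s + Real.sin u ^ 2)) := by fun_prop
      exact this.intervalIntegrable _ _
    · exact hcont.intervalIntegrable
    · intro u hu
      have hc := hcn u hu
      have hsu := hsn u hu
      have hc1 := Real.cos_le_one u
      simp only [hf']
      have h3 : Real.sin u ^ 2 = 1 - Real.cos u ^ 2 := Real.sin_sq _
      have hRR : √(s + Real.sin u ^ 2) ^ 2 = s + Real.sin u ^ 2 := Real.sq_sqrt (by positivity)
      have hR0 := Real.sqrt_nonneg (s + Real.sin u ^ 2)
      generalize √(s + Real.sin u ^ 2) = R at *
      generalize Real.sin u = S at *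
      generalize Real.cos u = C at *
      have hne : 1 + C ≠ 0 := by positivity
      have hσ : 0 ≤ S / (1 + C) - C * S / 2 := by
        have e : S / (1 + C) - C * S / 2 = S * (2 - C * (1 + C)) / (2 * (1 + C)) := by
          field_simp
        rw [e]
        apply div_nonneg _ (by positivity)
        apply mul_nonneg hsu
        nlinarith
      have hAM : S * R ≤ S ^ 2 + s / 2 := by nlinarith [sq_nonneg (S - R)]
      have h5 := mul_le_mul_of_nonneg_left hAM hσ
      have h6 : S / (1 + C) * S = 1 - C := by
        field_simp
        linear_combination h3
      have h7 : (S / (1 + C) - C * S / 2) * (S * R) = (1 - C - C * S ^ 2 / 2) * R := by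
        linear_combination R * h6
      rw [h7] at h5
      linarith
  refine hle.trans ?_
  set r := √(1 + s) with hr
  have hr1 : 1 ≤ r := by
    rw [hr]; exact Real.one_le_sqrt.mpr (by linarith)
  have hrr : r ^ 2 = 1 + s := Real.sq_sqrt (by linarith)
  have hval : f (π / 2) - f 0 = r / 2 + (2 + s) * r / 16 + (s / 2 - s ^ 2 / 16) * (Real.log (1 + r) - Real.log s / 2)
      + 3 / 8 - s / 8 + s / 2 * Real.log 2 := by
    simp only [hf, hP, Real.sin_pi_div_two, Real.cos_pi_div_two, Real.sin_zero, Real.cos_zero]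
    have e1 : √(s + 1 ^ 2) = r := by rw [hr]; congr 1; ring
    have e2 : √(s + 0 ^ 2) = √s := by congr 1; ring
    have e3 : (1:ℝ) + 1 = 2 := by norm_num
    rw [e1, e2, zero_add, Real.log_sqrt hs.le, e3]
    norm_num
    ring
  rw [hval]
  have hl16 : Real.log (16 / s) = 4 * Real.log 2 - Real.log s := by
    rw [Real.log_div (by norm_num) hs.ne']
    have : (16:ℝ) = 2 ^ 4 := by norm_num
    rw [this, Real.log_pow]; norm_num
  rw [hl16]
  have hlr : Real.log (1 + r) ≤ Real.log 2 + (r - 1) / 2 := by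
    have := Real.log_le_sub_one_of_pos (x := (1 + r) / 2) (by linarith)
    rw [Real.log_div (by linarith) (by norm_num)] at this
    linarith
  have hell : 5 / 4 ≤ Real.log (1 + r) - Real.log s / 2 := by
    rw [← Real.log_sqrt hs.le, ← Real.log_div (by linarith) (Real.sqrt_pos.mpr hs).ne',
      Real.le_log_iff_exp_le (by positivity), le_div_iff₀ (Real.sqrt_pos.mpr hs)]
    have hE : Real.exp (5 / 4) ≤ 3.4904 := by
      have := exp_div_le (k := 5) (j := 4) (E := 3.4904) (by norm_num) (by norm_num) (by norm_num)
      norm_num at this ⊢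
      exact this
    have ht0 := Real.sqrt_nonneg s
    have htt : √s ^ 2 = s := Real.sq_sqrt hs.le
    have ht6 : √s ≤ 0.6 := by
      rw [Real.sqrt_le_iff]; constructor <;> norm_num; linarith
    have : 3.4904 * √s - 1 ≤ r := by
      rw [hr]
      apply Real.le_sqrt_of_sq_le
      nlinarith
    nlinarith
  have a1 : s / 2 * Real.log (1 + r) ≤ s / 2 * (Real.log 2 + (r - 1) / 2) := by gcongr
  have a2 : s ^ 2 / 16 * (5 / 4) ≤ s ^ 2 / 16 * (Real.log (1 + r) - Real.log s / 2) := by gcongr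
  have hs' : s = r ^ 2 - 1 := by linarith
  have a3 : r / 2 + (2 + s) * r / 16 + s / 2 * ((r - 1) / 2) - s ^ 2 / 16 * (5 / 4) + 3 / 8 - s / 8 ≤ 1 + s / 4 := by
    exact ell_poly hs'
  linarith

theorem ell {s : ℝ} (hs : 0 < s) (hs5 : s ≤ 5) :
    ∫ u in (0:ℝ)..(π / 2), √(s + Real.sin u ^ 2) ≤ 1 + s / 4 + s / 4 * Real.log (16 / s) := by
  rcases le_total s (1 / 3) with h | h
  · exact ell_small hs h
  · exact (ell_large_int hs).trans (ell_large_num h hs5)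

theorem phase_one {c s X : ℝ} (hc : 0 < c) (hX : X = c ^ 2 * (1 + s)) :
    phase c X 1 = c * ∫ u in (0:ℝ)..(π / 2), √(s + Real.sin u ^ 2) := by
  unfold phase
  rw [Real.arcsin_one]
  have h1 := intervalIntegral.integral_comp_sub_left (a := 0) (b := π / 2)
    (fun u : ℝ => √(s + Real.sin u ^ 2)) (π / 2)
  simp only [sub_self, sub_zero, Real.sin_pi_div_two_sub] at h1
  rw [← h1, ← intervalIntegral.integral_const_mul]
  apply intervalIntegral.integral_congr
  intro u _
  have e : X - c ^ 2 * Real.sin u ^ 2 = c ^ 2 * (s + Real.cos u ^ 2) := by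
    rw [hX, Real.sin_sq]; ring
  simp only [e]
  rw [Real.sqrt_mul (sq_nonneg c), Real.sqrt_sq hc.le]

theorem stmt6 (c : ℝ) (hc : 0 < c) (δ : ℝ) (hδ1 : 0 < δ) (hδ2 : δ < 5 * π / 4 * c)
    (n : ℕ) (hn : 0 < n)
    (hnlow : (n : ℝ) > 2 * c / π + 2 / π ^ 2 * δ * Real.log (4 * Real.exp 1 * π * c / δ))
    (ψ : ℝ → ℝ) (χ : ℝ) (lam : ℂ)
    (hpswf : IsPSWF c n ψ χ lam) :
    χ > c ^ 2 + 4 / π * δ * c := by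
  by_contra hcon
  push Not at hcon
  obtain ⟨h1, h2, h3, hfin, hcard, -, -⟩ := hpswf
  have hpi := Real.pi_pos
  set s := 4 * δ / (π * c) with hs
  have hs0 : 0 < s := by positivity
  have hs5 : s ≤ 5 := by
    rw [hs, div_le_iff₀ (by positivity)]
    linarith
  have hX : c ^ 2 + 4 / π * δ * c = c ^ 2 * (1 + s) := by
    rw [hs]; field_simp
  have hXc : c ^ 2 < c ^ 2 + 4 / π * δ * c := by
    have : 0 < 4 / π * δ * c := by positivity
    linarith
  have hcount := (sol_of_ode h1 h2 h3).count hXc hcon hfin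
  rw [hcard, phase_neg, phase_one hc hX] at hcount
  have hell := ell hs0 hs5
  have hlog : Real.log (4 * Real.exp 1 * π * c / δ) = 1 + Real.log (16 / s) := by
    have e : 4 * Real.exp 1 * π * c / δ = Real.exp 1 * (16 / s) := by
      rw [hs]; field_simp; norm_num
    rw [e, Real.log_mul (Real.exp_pos 1).ne' (by positivity), Real.log_exp]
  rw [hlog] at hnlow
  have hδs : δ = π * c * s / 4 := by
    rw [hs]; field_simp
  have hmul := mul_lt_mul_of_pos_right hnlow hpi
  have e2 : (2 * c / π + 2 / π ^ 2 * δ * (1 + Real.log (16 / s))) * π =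
      2 * c * (1 + s / 4 + s / 4 * Real.log (16 / s)) := by
    generalize Real.log (16 / s) = L at *
    generalize s = t at *
    subst hδs
    field_simp
    ring
  rw [e2] at hmul
  have h9 := mul_le_mul_of_nonneg_left hell (by positivity : 0 ≤ 2 * c)
  linarith
end

section
/- Let c > 0 be a real number, let δ be a real number with 3 < δ < (5π/4)·c, and let n be a positive integer with 2c/π < n ≤ 2c/π + (2/π²)·δ·log(4·e·π·c/δ) − 3. Let ψ be the n-th PSWF with band limit c, with ODE eigenvalue χ_n. Then (χ_n − c²)/c² < (8/π)·(δ/c); equivalently, χ_n < c² + (8/π)·δ·c. -/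
open Real

/-- Positive case of the Sturm comparison. -/
theorem sturm_pos (c χ : ℝ) (hc : 0 < c) (hχ : c ^ 2 < χ) (ψ Θ : ℝ → ℝ)
    (hd : ∀ x ∈ Set.Ioo (-1 : ℝ) 1, DifferentiableAt ℝ ψ x ∧ DifferentiableAt ℝ (deriv ψ) x)
    (hode : ∀ x ∈ Set.Ioo (-1 : ℝ) 1,
      (1 - x ^ 2) * deriv (deriv ψ) x - 2 * x * deriv ψ x + (χ - c ^ 2 * x ^ 2) * ψ x = 0)
    (hΘ : ∀ x ∈ Set.Ioo (-1 : ℝ) 1,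
      HasDerivAt Θ (√(χ - c ^ 2 * x ^ 2) / √(1 - x ^ 2)) x)
    (α β : ℝ) (hα : -1 < α) (hαβ : α < β) (hβ : β < 1) (hπ : Θ β - Θ α = π)
    (hpos : ∀ x ∈ Set.Ioo α β, 0 < ψ x) : False := by
  have hsub : ∀ x ∈ Set.Icc α β, x ∈ Set.Ioo (-1 : ℝ) 1 := fun x hx =>
    ⟨lt_of_lt_of_le hα hx.1, lt_of_le_of_lt hx.2 hβ⟩
  have hp : ∀ x ∈ Set.Ioo (-1 : ℝ) 1, 0 < 1 - x ^ 2 := fun x hx => by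
    nlinarith [hx.1, hx.2]
  have hq : ∀ x ∈ Set.Ioo (-1 : ℝ) 1, 0 < χ - c ^ 2 * x ^ 2 := fun x hx => by
    nlinarith [hp x hx, sq_nonneg c, mul_nonneg (sq_nonneg c) (hp x hx).le]
  have hcont : ContinuousOn ψ (Set.Icc α β) := fun x hx =>
    (hd x (hsub x hx)).1.continuousAt.continuousWithinAt
  have hclos : closure (Set.Ioo α β) = Set.Icc α β := closure_Ioo hαβ.ne
  have hnn : ∀ x ∈ Set.Icc α β, 0 ≤ ψ x := by
    intro x hx
    have h1 : ContinuousOn ψ (closure (Set.Ioo α β)) := by rw [hclos]; exact hcont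
    have h2 : x ∈ closure (Set.Ioo α β) := by rw [hclos]; exact hx
    exact le_on_closure (f := fun _ => (0:ℝ)) (g := ψ) (fun y hy => (hpos y hy).le)
      continuousOn_const h1 h2
  have hΘm : StrictMonoOn Θ (Set.Icc α β) := by
    apply strictMonoOn_of_deriv_pos (convex_Icc α β)
    · exact fun x hx => (hΘ x (hsub x hx)).continuousAt.continuousWithinAt
    · intro x hx
      rw [interior_Icc] at hx
      have hx' := hsub x (Set.Ioo_subset_Icc_self hx)
      rw [(hΘ x hx').deriv]
      exact div_pos (Real.sqrt_pos.2 (hq x hx')) (Real.sqrt_pos.2 (hp x hx'))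
  set W : ℝ → ℝ := fun x =>
    Real.exp (-(Real.log (1 - x ^ 2) + Real.log (χ - c ^ 2 * x ^ 2)) / 4) *
      ((1 - x ^ 2) * deriv ψ x * Real.sin (Θ x - Θ α) -
        ψ x * (x / 2 * (1 + c ^ 2 * (1 - x ^ 2) / (χ - c ^ 2 * x ^ 2)) * Real.sin (Θ x - Θ α) +
          √(1 - x ^ 2) * √(χ - c ^ 2 * x ^ 2) * Real.cos (Θ x - Θ α))) with hW
  have hWd : ∀ x ∈ Set.Ioo (-1 : ℝ) 1, ∃ K : ℝ, 0 < K ∧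
      HasDerivAt W (-(K * (ψ x * Real.sin (Θ x - Θ α)))) x := by
    intro x hx
    have hpx := hp x hx
    have hqx := hq x hx
    have dp : HasDerivAt (fun x : ℝ => 1 - x ^ 2) (-(2 * x)) x := by
      simpa using ((hasDerivAt_id x).pow 2).const_sub 1
    have dq : HasDerivAt (fun x : ℝ => χ - c ^ 2 * x ^ 2) (-(c ^ 2 * (2 * x))) x := by
      simpa using (((hasDerivAt_id x).pow 2).const_mul (c ^ 2)).const_sub χ
    have d1 := (hd x hx).1.hasDerivAt
    have d2 := (hd x hx).2.hasDerivAt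
    have dT := (hΘ x hx).sub_const (Θ α)
    have dA := ((((dp.log hpx.ne').add (dq.log hqx.ne')).neg).div_const 4).exp
    have dR := (dp.sqrt hpx.ne').mul (dq.sqrt hqx.ne')
    have dM := ((hasDerivAt_id x).div_const 2).mul (((dp.const_mul (c ^ 2)).div dq hqx.ne').const_add 1)
    have dW := dA.mul (((dp.mul d2).mul dT.sin).sub (d1.mul ((dM.mul dT.sin).add (dR.mul dT.cos))))
    set p := 1 - x ^ 2 with hpdef
    set q := χ - c ^ 2 * x ^ 2 with hqdef
    refine ⟨Real.exp (-(Real.log p + Real.log q) / 4) *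
      ((1 + c ^ 2 * p / q) / 2 + x ^ 2 * (5 * (c ^ 2 * p / q) ^ 2 - 2 * (c ^ 2 * p / q) + 1) / (4 * p)),
      ?_, ?_⟩
    · have hs : 0 < c ^ 2 * p / q := by positivity
      apply mul_pos (Real.exp_pos _)
      apply add_pos_of_pos_of_nonneg
      · positivity
      · apply div_nonneg _ (by positivity)
        apply mul_nonneg (sq_nonneg _)
        nlinarith [sq_nonneg (5 * (c ^ 2 * p / q) - 1)]
    · refine dW.congr_deriv ?_
      have ho := hode x hx
      have hdd : deriv (deriv ψ) x = (2 * x * deriv ψ x - q * ψ x) / p := by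
        field_simp; linarith
      obtain ⟨a, ha, hpa⟩ : ∃ a : ℝ, 0 < a ∧ p = a ^ 2 :=
        ⟨√p, Real.sqrt_pos.2 hpx, (Real.sq_sqrt hpx.le).symm⟩
      obtain ⟨b, hb, hqb⟩ : ∃ b : ℝ, 0 < b ∧ q = b ^ 2 :=
        ⟨√q, Real.sqrt_pos.2 hqx, (Real.sq_sqrt hqx.le).symm⟩
      have hx2 : x ^ 2 = 1 - a ^ 2 := by rw [← hpa, hpdef]; ring
      simp only [Pi.add_apply, Pi.mul_apply, Pi.neg_apply, Pi.sub_apply, Pi.div_apply, id_eq,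
        ← hpdef, ← hqdef]
      rw [hdd]
      simp only [hpa, hqb, Real.sqrt_sq ha.le, Real.sqrt_sq hb.le]
      generalize Real.exp (-(Real.log (a ^ 2) + Real.log (b ^ 2)) / 4) = E
      generalize Real.sin (Θ x - Θ α) = S
      generalize Real.cos (Θ x - Θ α) = C
      generalize ψ x = u
      generalize deriv ψ x = v
      clear_value p q
      field_simp
      ring
  have hanti : StrictAntiOn W (Set.Icc α β) := by
    apply strictAntiOn_of_deriv_neg (convex_Icc α β)
    · intro x hx
      obtain ⟨K, -, hK⟩ := hWd x (hsub x hx)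
      exact hK.continuousAt.continuousWithinAt
    · intro x hx
      rw [interior_Icc] at hx
      have hx' := Set.Ioo_subset_Icc_self hx
      obtain ⟨K, hK0, hK⟩ := hWd x (hsub x hx')
      rw [hK.deriv, neg_lt_zero]
      have h1 := hΘm (Set.left_mem_Icc.2 hαβ.le) hx' hx.1
      have h2 := hΘm hx' (Set.right_mem_Icc.2 hαβ.le) hx.2
      exact mul_pos hK0 (mul_pos (hpos x hx)
        (Real.sin_pos_of_pos_of_lt_pi (by linarith) (by linarith)))
  have hlt := hanti (Set.left_mem_Icc.2 hαβ.le) (Set.right_mem_Icc.2 hαβ.le) hαβ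
  have hWa : W α ≤ 0 := by
    have h0 := hnn α (Set.left_mem_Icc.2 hαβ.le)
    simp only [hW, sub_self, Real.sin_zero, Real.cos_zero, mul_zero, zero_add, mul_one, zero_sub,
      mul_neg, Left.neg_nonpos_iff]
    positivity
  have hWb : 0 ≤ W β := by
    have h0 := hnn β (Set.right_mem_Icc.2 hαβ.le)
    simp only [hW, hπ, Real.sin_pi, Real.cos_pi, mul_zero, zero_add, mul_one, zero_sub,
      mul_neg, neg_neg]
    positivity
  linarith

/-- Sturm comparison: a zero of `ψ` between points at phase distance `π`. -/
theorem sturm_zero (c χ : ℝ) (hc : 0 < c) (hχ : c ^ 2 < χ) (ψ Θ : ℝ → ℝ)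
    (hd : ∀ x ∈ Set.Ioo (-1 : ℝ) 1, DifferentiableAt ℝ ψ x ∧ DifferentiableAt ℝ (deriv ψ) x)
    (hode : ∀ x ∈ Set.Ioo (-1 : ℝ) 1,
      (1 - x ^ 2) * deriv (deriv ψ) x - 2 * x * deriv ψ x + (χ - c ^ 2 * x ^ 2) * ψ x = 0)
    (hΘ : ∀ x ∈ Set.Ioo (-1 : ℝ) 1,
      HasDerivAt Θ (√(χ - c ^ 2 * x ^ 2) / √(1 - x ^ 2)) x)
    (α β : ℝ) (hα : -1 < α) (hαβ : α < β) (hβ : β < 1) (hπ : Θ β - Θ α = π) :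
    ∃ z ∈ Set.Ioo α β, ψ z = 0 := by
  by_contra! hne
  have hcont : ContinuousOn ψ (Set.Ioo α β) := fun x hx =>
    (hd x ⟨hα.trans hx.1, hx.2.trans hβ⟩).1.continuousAt.continuousWithinAt
  have hm : (α + β) / 2 ∈ Set.Ioo α β := ⟨by linarith, by linarith⟩
  have key : ∀ x ∈ Set.Ioo α β, ∀ y ∈ Set.Ioo α β, ψ x < 0 → 0 < ψ y → False := by
    intro x hx y hy h1 h2
    obtain ⟨z, hz, hz0⟩ := isPreconnected_Ioo.intermediate_value hx hy hcont ⟨h1.le, h2.le⟩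
    exact hne z hz hz0
  rcases lt_or_gt_of_ne (hne _ hm) with h | h
  · refine sturm_pos c χ hc hχ (fun x => -ψ x) Θ ?_ ?_ hΘ α β hα hαβ hβ hπ ?_
    · intro x hx
      have e : deriv (fun x => -ψ x) = fun x => -deriv ψ x := by
        funext y; exact deriv.fun_neg
      rw [e]
      exact ⟨(hd x hx).1.neg, (hd x hx).2.neg⟩
    · intro x hx
      have e : deriv (fun x => -ψ x) = fun x => -deriv ψ x := by
        funext y; exact deriv.fun_neg
      have e2 : deriv (fun x => -deriv ψ x) x = -deriv (deriv ψ) x := deriv.fun_neg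
      rw [e, e2]
      linarith [hode x hx]
    · intro x hx
      rcases lt_or_gt_of_ne (hne x hx) with h' | h'
      · simpa using h'
      · exact (key _ hm x hx h h').elim
  · refine sturm_pos c χ hc hχ ψ Θ hd hode hΘ α β hα hαβ hβ hπ ?_
    intro x hx
    rcases lt_or_gt_of_ne (hne x hx) with h' | h'
    · exact (key x hx _ hm h' h).elim
    · exact h'

/-- Lower bound for the elliptic integral. -/
theorem elliptic_lower (η : ℝ) (h0 : 0 < η) (h1 : η < 10) :
    1 + η / 8 * (1 + Real.log (32 / η)) ≤ ∫ t in (0 : ℝ)..(π / 2), √(η + Real.sin t ^ 2) := by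
  have hpi := Real.pi_gt_three
  have hpos : ∀ t : ℝ, 0 < η + t ^ 2 := fun t => by positivity
  -- the antiderivative of the minorant
  have hder : ∀ t ∈ Set.uIcc (0 : ℝ) (π / 2),
      HasDerivAt (fun t => -Real.cos t + (t / 2 * √(η + t ^ 2) +
        η / 2 * Real.log (t + √(η + t ^ 2)) - t ^ 2 / 2))
        (Real.sin t + (√(η + t ^ 2) - t)) t := by
    intro t ht
    rw [Set.uIcc_of_le (by positivity)] at ht
    have dq : HasDerivAt (fun t : ℝ => η + t ^ 2) (2 * t) t := by
      simpa using ((hasDerivAt_id t).pow 2).const_add η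
    have hs : 0 < √(η + t ^ 2) := Real.sqrt_pos.2 (hpos t)
    have hne : t + √(η + t ^ 2) ≠ 0 := by have := ht.1; positivity
    have ds := dq.sqrt (hpos t).ne'
    have d := (Real.hasDerivAt_cos t).neg.add
      (((((hasDerivAt_id t).div_const 2).mul ds).add
        ((((hasDerivAt_id t).add ds).log hne).const_mul (η / 2))).sub
          (((hasDerivAt_id t).pow 2).div_const 2))
    refine d.congr_deriv ?_
    simp only [Pi.add_apply, id_eq]
    have hsq : √(η + t ^ 2) ^ 2 = η + t ^ 2 := Real.sq_sqrt (hpos t).le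
    generalize √(η + t ^ 2) = s at *
    have hη : η = s ^ 2 - t ^ 2 := by linarith
    subst hη
    field_simp
    ring
  have hc1 : Continuous fun t : ℝ => Real.sin t + (√(η + t ^ 2) - t) := by fun_prop
  have hint := intervalIntegral.integral_eq_sub_of_hasDerivAt hder (hc1.intervalIntegrable _ _)
  have hle : ∫ t in (0 : ℝ)..(π / 2), (Real.sin t + (√(η + t ^ 2) - t)) ≤
      ∫ t in (0 : ℝ)..(π / 2), √(η + Real.sin t ^ 2) := by
    apply intervalIntegral.integral_mono_on (by positivity) (hc1.intervalIntegrable _ _)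
    · exact (by fun_prop : Continuous fun t : ℝ => √(η + Real.sin t ^ 2)).intervalIntegrable _ _
    · intro t ht
      have hs0 : 0 ≤ Real.sin t := Real.sin_nonneg_of_nonneg_of_le_pi ht.1 (by linarith [ht.2])
      have hst : Real.sin t ≤ t := Real.sin_le ht.1
      generalize Real.sin t = s at *
      have ha := Real.sq_sqrt (hpos t).le
      have hb := Real.sq_sqrt (hpos s).le
      have ha0 : t ≤ √(η + t ^ 2) := Real.le_sqrt_of_sq_le (by linarith)
      have hb0 : s ≤ √(η + s ^ 2) := Real.le_sqrt_of_sq_le (by linarith)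
      have hb1 : 0 < √(η + s ^ 2) := Real.sqrt_pos.2 (hpos s)
      generalize √(η + t ^ 2) = a at *
      generalize √(η + s ^ 2) = b at *
      nlinarith [mul_nonneg (sub_nonneg.2 hst) (sub_nonneg.2 ha0),
        mul_nonneg (sub_nonneg.2 hst) (sub_nonneg.2 hb0)]
  rw [hint] at hle
  refine le_trans ?_ hle
  have hsq : √(η + (π / 2) ^ 2) ^ 2 = η + (π / 2) ^ 2 := Real.sq_sqrt (hpos _).le
  have hs0 : 0 ≤ √(η + (π / 2) ^ 2) := Real.sqrt_nonneg _
  have hη0 : √η ^ 2 = η := Real.sq_sqrt h0.le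
  have hη1 : 0 < √η := Real.sqrt_pos.2 h0
  simp only [Real.cos_pi_div_two, Real.cos_zero]
  have hlog : Real.log (32 / η) / 4 + Real.log (√η) ≤
      Real.log (π / 2 + √(η + (π / 2) ^ 2)) := by
    have e1 : Real.log (√η) = Real.log η / 2 := Real.log_sqrt h0.le
    have e2 : Real.log (32 / η) = Real.log 32 - Real.log η := Real.log_div (by norm_num) h0.ne'
    have e3 : Real.log (32 * η) = Real.log 32 + Real.log η := Real.log_mul (by norm_num) h0.ne'
    have e4 : Real.log (32 * η) ≤ Real.log ((π / 2 + √(η + (π / 2) ^ 2)) ^ 4) := by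
      apply Real.log_le_log (by positivity)
      generalize √(η + (π / 2) ^ 2) = s at *
      have hb : 3 / 2 ≤ π / 2 := by linarith
      generalize π / 2 = b at *
      have hsb : b ≤ s := by nlinarith
      have h9 : 9 + η ≤ (b + s) ^ 2 := by nlinarith
      calc 32 * η ≤ (9 + η) ^ 2 := by nlinarith [sq_nonneg (η - 9)]
        _ ≤ ((b + s) ^ 2) ^ 2 := by gcongr
        _ = (b + s) ^ 4 := by ring
    rw [Real.log_pow] at e4
    push_cast at e4
    linarith
  have hfirst : 1 / 4 * η ≤ π / 2 * √(η + (π / 2) ^ 2) - (π / 2) ^ 2 := by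
    have hb : 3 / 2 ≤ π / 2 := by linarith
    generalize √(η + (π / 2) ^ 2) = s at *
    generalize π / 2 = b at *
    have h8 : η ≤ 8 * b ^ 2 := by nlinarith
    have hsq' : (b ^ 2 + η / 4) ^ 2 ≤ (b * s) ^ 2 := by
      rw [mul_pow, hsq]; nlinarith [mul_nonneg h0.le (sub_nonneg.2 h8)]
    have := abs_le_of_sq_le_sq' hsq' (by positivity)
    linarith [this.2]
  have e5 : η / 2 * (Real.log (32 / η) / 4 + Real.log (√η)) ≤ η / 2 *
      Real.log (π / 2 + √(η + (π / 2) ^ 2)) := by gcongr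
  simp only [ne_eq, OfNat.ofNat_ne_zero, not_false_eq_true, zero_pow, add_zero, zero_add,
    zero_div, zero_mul, sub_zero]
  linarith

theorem stmt7_aux (c : ℝ) (hc : 0 < c) (n : ℕ)
    (ψ : ℝ → ℝ) (χ : ℝ) (hχ : c ^ 2 < χ)
    (hd : ∀ x ∈ Set.Ioo (-1 : ℝ) 1, DifferentiableAt ℝ ψ x ∧ DifferentiableAt ℝ (deriv ψ) x)
    (hode : ∀ x ∈ Set.Ioo (-1 : ℝ) 1,
      (1 - x ^ 2) * deriv (deriv ψ) x - 2 * x * deriv ψ x + (χ - c ^ 2 * x ^ 2) * ψ x = 0)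
    (hfin : {x | x ∈ Set.Ioo (-1 : ℝ) 1 ∧ ψ x = 0}.Finite)
    (hcard : {x | x ∈ Set.Ioo (-1 : ℝ) 1 ∧ ψ x = 0}.ncard = n)
    (hL : (n + 1) * π < 2 * ∫ t in (0 : ℝ)..(π / 2), √(χ - c ^ 2 + c ^ 2 * Real.sin t ^ 2)) :
    False := by
  have hpi := Real.pi_pos
  set f : ℝ → ℝ := fun t => √(χ - c ^ 2 * Real.sin t ^ 2) with hf
  have hfc : Continuous f := by fun_prop
  set F : ℝ → ℝ := fun y => ∫ t in (0 : ℝ)..y, f t with hF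
  have hFd : ∀ y, HasDerivAt F (f y) y := fun y => hfc.integral_hasStrictDerivAt 0 y |>.hasDerivAt
  have hFm : Monotone F := by
    apply monotone_of_deriv_nonneg (fun y => (hFd y).differentiableAt)
    intro y; rw [(hFd y).deriv]; exact Real.sqrt_nonneg _
  set ℓ := ∫ t in (0 : ℝ)..(π / 2), √(χ - c ^ 2 + c ^ 2 * Real.sin t ^ 2) with hℓ
  have hF1 : F (π / 2) = ℓ := by
    have := intervalIntegral.integral_comp_sub_left (a := 0) (b := π / 2) f (π / 2)
    simp only [sub_self, sub_zero] at this
    rw [hF, hℓ]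
    simp only
    rw [← this]
    congr 1
    funext t
    simp only [hf, Real.sin_pi_div_two_sub]
    congr 1
    rw [Real.cos_sq']; ring
  have hF2 : F (-(π / 2)) = -ℓ := by
    have := intervalIntegral.integral_comp_neg (a := 0) (b := π / 2) f
    rw [neg_zero] at this
    rw [← hF1, hF]
    simp only
    rw [intervalIntegral.integral_symm, ← this]
    congr 2
    funext t
    simp [hf]
  set ε := (2 * ℓ - (n + 1) * π) / 2 with hε
  have hε0 : 0 < ε := by rw [hε]; linarith
  have hex : ∀ i : ℕ, i ≤ n + 1 → ∃ y ∈ Set.Ioo (-(π / 2)) (π / 2), F y = -ℓ + ε + i * π := by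
    intro i hi
    have hi' : (i : ℝ) ≤ n + 1 := by exact_mod_cast hi
    have hi2 : (i : ℝ) * π ≤ (n + 1) * π := by gcongr
    have hi3 : 0 ≤ (i : ℝ) * π := by positivity
    have := intermediate_value_Ioo (a := -(π / 2)) (b := π / 2) (by linarith) (f := F)
      (fun y _ => (hFd y).continuousAt.continuousWithinAt)
    rw [hF1, hF2] at this
    exact this ⟨by linarith, by rw [hε] at *; linarith⟩
  choose! y hy hFy using hex
  have hΘ : ∀ x ∈ Set.Ioo (-1 : ℝ) 1,
      HasDerivAt (fun x => F (Real.arcsin x)) (√(χ - c ^ 2 * x ^ 2) / √(1 - x ^ 2)) x := by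
    intro x hx
    have h1 := (hFd (Real.arcsin x)).comp x (Real.hasDerivAt_arcsin hx.1.ne' hx.2.ne)
    refine h1.congr_deriv ?_
    simp only [hf, Real.sin_arcsin hx.1.le hx.2.le]
    ring
  have hlt : ∀ i, i ≤ n → y i < y (i + 1) := by
    intro i hi
    apply hFm.reflect_lt
    rw [hFy i (by omega), hFy (i + 1) (by omega)]
    push_cast
    linarith
  have hmem : ∀ i, i ≤ n + 1 → Real.sin (y i) ∈ Set.Ioo (-1 : ℝ) 1 := by
    intro i hi
    have h := hy i hi
    constructor
    · have := Real.strictMonoOn_sin (Set.left_mem_Icc.2 (by linarith)) (Set.Ioo_subset_Icc_self h) h.1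
      simpa using this
    · have := Real.strictMonoOn_sin (Set.Ioo_subset_Icc_self h) (Set.right_mem_Icc.2 (by linarith)) h.2
      simpa using this
  have hsin : ∀ i, i ≤ n → Real.sin (y i) < Real.sin (y (i + 1)) := fun i hi =>
    Real.strictMonoOn_sin (Set.Ioo_subset_Icc_self (hy i (by omega)))
      (Set.Ioo_subset_Icc_self (hy (i + 1) (by omega))) (hlt i hi)
  have hz : ∀ i, i ≤ n → ∃ z ∈ Set.Ioo (Real.sin (y i)) (Real.sin (y (i + 1))), ψ z = 0 := by
    intro i hi
    refine sturm_zero c χ hc hχ ψ (fun x => F (Real.arcsin x)) hd hode hΘ _ _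
      (hmem i (by omega)).1 (hsin i hi) (hmem (i + 1) (by omega)).2 ?_
    have h1 := hy i (by omega)
    have h2 := hy (i + 1) (by omega)
    rw [Real.arcsin_sin h1.1.le h1.2.le, Real.arcsin_sin h2.1.le h2.2.le,
      hFy i (by omega), hFy (i + 1) (by omega)]
    push_cast
    ring
  choose! z hzm hz0 using hz
  have hmono : StrictMonoOn z (Set.Iic n) := by
    apply strictMonoOn_of_lt_succ Set.ordConnected_Iic
    intro i _ hi hi'
    rw [Nat.succ_eq_succ, Nat.succ_eq_add_one] at *
    exact (hzm i hi).2.trans (hzm (i + 1) hi').1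
  have himg : z '' (Set.Iic n) ⊆ {x | x ∈ Set.Ioo (-1 : ℝ) 1 ∧ ψ x = 0} := by
    rintro _ ⟨i, hi, rfl⟩
    have hi : i ≤ n := hi
    exact ⟨⟨(hmem i (by omega)).1.trans (hzm i hi).1,
      (hzm i hi).2.trans (hmem (i + 1) (by omega)).2⟩, hz0 i hi⟩
  have h1 := Set.ncard_le_ncard himg hfin
  rw [hmono.injOn.ncard_image, hcard, Set.ncard_eq_toFinset_card'] at h1
  simp at h1

theorem stmt7 (c : ℝ) (hc : 0 < c) (δ : ℝ) (hδ1 : 3 < δ) (hδ2 : δ < 5 * π / 4 * c)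
    (n : ℕ) (hn : 0 < n)
    (hnlow : 2 * c / π < (n : ℝ))
    (hnhigh : (n : ℝ) ≤ 2 * c / π + 2 / π ^ 2 * δ * Real.log (4 * Real.exp 1 * π * c / δ) - 3)
    (ψ : ℝ → ℝ) (χ : ℝ) (lam : ℂ)
    (hpswf : IsPSWF c n ψ χ lam) :
    (χ - c ^ 2) / c ^ 2 < 8 / π * (δ / c) := by
  obtain ⟨-, hd, hode, hfin, hcard, -, -⟩ := hpswf
  have hpi := Real.pi_pos
  by_contra! hcon
  set η := 8 / π * (δ / c) with hη
  have hη0 : 0 < η := by positivity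
  have hη1 : η < 10 := by
    have : η = 8 * δ / (π * c) := by rw [hη]; field_simp
    rw [this, div_lt_iff₀ (by positivity)]
    linarith
  have hχ : c ^ 2 * η ≤ χ - c ^ 2 := by
    rw [le_div_iff₀ (by positivity)] at hcon
    linarith
  have hcη : 0 < c ^ 2 * η := by positivity
  refine stmt7_aux c hc n ψ χ (by linarith) hd hode hfin hcard ?_
  have hle : c * ∫ t in (0 : ℝ)..(π / 2), √(η + Real.sin t ^ 2) ≤
      ∫ t in (0 : ℝ)..(π / 2), √(χ - c ^ 2 + c ^ 2 * Real.sin t ^ 2) := by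
    rw [← intervalIntegral.integral_const_mul]
    apply intervalIntegral.integral_mono_on (by positivity)
    · exact (by fun_prop : Continuous fun t : ℝ => c * √(η + Real.sin t ^ 2)).intervalIntegrable _ _
    · exact (by fun_prop : Continuous fun t : ℝ =>
        √(χ - c ^ 2 + c ^ 2 * Real.sin t ^ 2)).intervalIntegrable _ _
    · intro t _
      apply Real.le_sqrt_of_sq_le
      rw [mul_pow, Real.sq_sqrt (by positivity)]
      linarith
  have hell := mul_le_mul_of_nonneg_left (elliptic_lower η hη0 hη1) hc.le
  have hlog : Real.log (4 * Real.exp 1 * π * c / δ) = 1 + Real.log (32 / η) := by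
    have : 4 * Real.exp 1 * π * c / δ = Real.exp 1 * (32 / η) := by
      rw [hη]; field_simp; norm_num
    rw [this, Real.log_mul (Real.exp_pos 1).ne' (by positivity), Real.log_exp]
  rw [hlog] at hnhigh
  set K := 1 + Real.log (32 / η)
  have h2 : (2 * c / π + 2 / π ^ 2 * δ * K - 3) * π = 2 * (c * (1 + η / 8 * K)) - 3 * π := by
    rw [hη]; field_simp
  have h3 := mul_le_mul_of_nonneg_right hnhigh hpi.le
  rw [h2] at h3
  nlinarith
end
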